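/- arXiv:1905.06433 — 6 statements merged into one kernel-verified Lean document; each statement's English description precedes it below -/
import Mathlib

section
/- Let n ≥ 1, let g : ℝⁿ → ℝ be continuous, let f : ℝⁿ → ℝ be integrable with f(x) > 0 for every x ∈ ℝⁿ, assume the product f·g is integrable, and let c₀ ≥ 0 satisfy |g(x)| ≥ c₀ for all x ∈ ℝⁿ. Then |∫_{ℝⁿ} f(x) g(x) dx| ≥ c₀ · ∫_{ℝⁿ} f(x) dx. -/
open MeasureTheory

section ConstantSign

variable {X α : Type*} [TopologicalSpace X] [PreconnectedSpace X]

theorem forall_lt_or_forall_gt_of_continuous_of_forall_ne [LinearOrder α] [TopologicalSpace α]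
    [OrderClosedTopology α] {f g : X → α} (hf : Continuous f) (hg : Continuous g)
    (hne : ∀ x, f x ≠ g x) : (∀ x, f x < g x) ∨ ∀ x, g x < f x := by
  by_contra! h
  obtain ⟨⟨a, ha⟩, b, hb⟩ := h
  obtain ⟨z, hz⟩ := intermediate_value_univ₂ hf hg hb ha
  exact hne z hz

theorem forall_le_or_forall_le_neg_of_continuous_of_forall_le_abs [AddCommGroup α] [LinearOrder α]
    [IsOrderedAddMonoid α] [TopologicalSpace α] [OrderClosedTopology α] {g : X → α} {c : α}
    (hg : Continuous g) (hc : 0 < c) (hgc : ∀ x, c ≤ |g x|) :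
    (∀ x, c ≤ g x) ∨ ∀ x, g x ≤ -c := by
  have hne : ∀ x, 0 ≠ g x := fun x ↦ (abs_pos.mp (hc.trans_le (hgc x))).symm
  refine (forall_lt_or_forall_gt_of_continuous_of_forall_ne continuous_const hg hne).imp
    (fun hpos x ↦ ?_) fun hneg x ↦ ?_
  · simpa only [abs_of_pos (hpos x)] using hgc x
  · exact le_neg_of_le_neg (abs_of_neg (hneg x) ▸ hgc x)

end ConstantSign

section WeightedIntegral

variable {X : Type*} [MeasurableSpace X] {μ : Measure X} {f g : X → ℝ} {c : ℝ}

theorem mul_integral_le_integral_mul_of_ae_le (hf : Integrable f μ) (hf₀ : 0 ≤ᵐ[μ] f)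
    (hfg : Integrable (fun x ↦ f x * g x) μ) (hcg : ∀ᵐ x ∂μ, c ≤ g x) :
    c * ∫ x, f x ∂μ ≤ ∫ x, f x * g x ∂μ := by
  rw [mul_comm, ← integral_mul_const]
  refine integral_mono_ae (hf.mul_const c) hfg ?_
  filter_upwards [hf₀, hcg] with x hfx hcgx
  exact mul_le_mul_of_nonneg_left hcgx hfx

theorem integral_mul_le_mul_integral_of_ae_le (hf : Integrable f μ) (hf₀ : 0 ≤ᵐ[μ] f)
    (hfg : Integrable (fun x ↦ f x * g x) μ) (hgc : ∀ᵐ x ∂μ, g x ≤ c) :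
    ∫ x, f x * g x ∂μ ≤ c * ∫ x, f x ∂μ := by
  rw [mul_comm c, ← integral_mul_const]
  refine integral_mono_ae hfg (hf.mul_const c) ?_
  filter_upwards [hf₀, hgc] with x hfx hgcx
  exact mul_le_mul_of_nonneg_left hgcx hfx

end WeightedIntegral

theorem stmt_0_general {X : Type*} [TopologicalSpace X] [PreconnectedSpace X] [MeasurableSpace X]
    {μ : Measure X} {f g : X → ℝ} {c : ℝ} (hg : Continuous g) (hf : Integrable f μ)
    (hf₀ : 0 ≤ᵐ[μ] f) (hfg : Integrable (fun x ↦ f x * g x) μ) (hgc : ∀ x, c ≤ |g x|) :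
    c * ∫ x, f x ∂μ ≤ |∫ x, f x * g x ∂μ| := by
  rcases le_or_gt c 0 with hc | hc
  · exact (mul_nonpos_of_nonpos_of_nonneg hc (integral_nonneg_of_ae hf₀)).trans (abs_nonneg _)
  rcases forall_le_or_forall_le_neg_of_continuous_of_forall_le_abs hg hc hgc with hge | hle
  · have hlower := mul_integral_le_integral_mul_of_ae_le hf hf₀ hfg (ae_of_all μ hge)
    exact hlower.trans (le_abs_self _)
  · have hupper := integral_mul_le_mul_integral_of_ae_le hf hf₀ hfg (ae_of_all μ hle)
    rw [neg_mul] at hupper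
    exact (le_neg_of_le_neg hupper).trans (neg_le_abs _)

theorem stmt_0 (n : ℕ) (hn : 1 ≤ n) (f g : (Fin n → ℝ) → ℝ)
    (hg : Continuous g) (hf : Integrable f)
    (hfpos : ∀ x, 0 < f x)
    (hfg : Integrable (fun x => f x * g x))
    (c₀ : ℝ) (hc₀ : 0 ≤ c₀) (hgb : ∀ x, c₀ ≤ |g x|) :
    c₀ * ∫ x, f x ≤ |∫ x, f x * g x| :=
  stmt_0_general hg hf (ae_of_all _ fun x ↦ (hfpos x).le) hfg hgb
end

section
/- Let k > 0 and t ∈ ℝ with t ≠ 0. Then the improper integral lim_{R→∞} ∫_{−R}^{R} e^{2πitx}/(x − ik) dx exists and equals 2πi·e^{−2πkt} if t > 0, and equals 0 if t < 0. -/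
open MeasureTheory Real Filter

/-!
Let `f z = exp (2πitz)` with `t > 0`: it is bounded on the upper half plane and tends to zero as
`Im z → ∞`, uniformly in `Re z`. If the pole `p` lies below the real axis, Jordan's lemma shows that
the integral of `f x / (x - p)` tends to zero. If `p` lies above it, subtract from `f` the function
`2p / (z + p) * f p`, which agrees with `f` at `p`: the pole becomes removable, Jordan's lemma
applies again, and what is left is `f p` times the integral of
`2p / ((x - p) (x + p)) = (x - p)⁻¹ - (x + p)⁻¹`, which the complex logarithm evaluates to `2πi` in
the limit. The reflection `x ↦ -x` reduces `t < 0` to `t > 0`,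
and for `t = 0` the logarithm alone suffices.
-/

open Set Topology Bornology Asymptotics

open Complex (I)

section Jordan

lemma comap_im_atTop_le_cobounded : comap Complex.im atTop ≤ cobounded ℂ := by
  rw [← comap_norm_atTop, ← tendsto_iff_comap]
  exact tendsto_atTop_mono (fun z => (le_abs_self _).trans (Complex.abs_im_le_norm z)) tendsto_comap

lemma ofReal_mul_im_pos {R : ℝ} (hR : 0 < R) {z : ℂ} (hz : 0 < z.im) : 0 < (R * z : ℂ).im := by
  simpa using mul_pos hR hz

lemma tendsto_ofReal_mul_comap_im_atTop {z : ℂ} (hz : 0 < z.im) :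
    Tendsto (fun R : ℝ => (R * z : ℂ)) atTop (comap Complex.im atTop) := by
  rw [tendsto_comap_iff]
  simpa [Function.comp_def] using tendsto_id.atTop_mul_const hz

variable {E : Type*} [NormedAddCommGroup E] [NormedSpace ℂ E] {g : ℂ → E}

/- Once the contour is scaled to a fixed size, its sides satisfy the hypotheses of dominated
convergence. -/
lemma tendsto_integral_dilation_zero (hg : ContinuousOn g {z | 0 < z.im})
    (hO : g =O[cobounded ℂ ⊓ 𝓟 {z | 0 < z.im}] (·⁻¹))
    (ho : g =o[comap Complex.im atTop] (·⁻¹)) {γ : ℝ → ℂ} {a b : ℝ}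
    (hγ : ContinuousOn γ (uIoc a b)) (hγ_norm : ∀ s ∈ uIoc a b, 1 ≤ ‖γ s‖)
    (hγ_im : ∀ s ∈ uIoc a b, 0 < (γ s).im) :
    Tendsto (fun R : ℝ => ∫ s in a..b, (R : ℂ) • g (R * γ s)) atTop (𝓝 0) := by
  obtain ⟨C, hC⟩ := hO.bound
  obtain ⟨r, -, hr⟩ := hasBasis_cobounded_norm.eventually_iff.1 (eventually_inf_principal.1 hC)
  rw [← intervalIntegral.integral_zero (μ := volume) (a := a) (b := b)]
  refine intervalIntegral.tendsto_integral_filter_of_dominated_convergence (fun _ => |C|) ?_ ?_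
    intervalIntegrable_const ?_
  · filter_upwards [eventually_gt_atTop 0] with R hR
    refine ContinuousOn.aestronglyMeasurable ?_ measurableSet_uIoc
    exact (hg.comp (by fun_prop) fun s hs => ofReal_mul_im_pos hR (hγ_im s hs)).const_smul _
  · filter_upwards [eventually_gt_atTop 0, eventually_ge_atTop r] with R hR hrR
    refine Eventually.of_forall fun s hs => ?_
    have h_norm : ‖(R * γ s : ℂ)‖ = R * ‖γ s‖ := by simp [abs_of_pos hR]
    have h_far : R ≤ R * ‖γ s‖ := le_mul_of_one_le_right hR.le (hγ_norm s hs)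
    have h_bound := hr (show r ≤ ‖(R * γ s : ℂ)‖ by linarith) (ofReal_mul_im_pos hR (hγ_im s hs))
    calc ‖(R : ℂ) • g (R * γ s)‖ = R * ‖g (R * γ s)‖ := by simp [norm_smul, abs_of_pos hR]
      _ ≤ R * (|C| * (R * ‖γ s‖)⁻¹) := by
          rw [norm_inv, h_norm] at h_bound
          gcongr
          exact h_bound.trans (by gcongr; exact le_abs_self C)
      _ ≤ R * (|C| * R⁻¹) := by gcongr
      _ = |C| := by field_simp
  · refine Eventually.of_forall fun s hs => ?_
    have h_ray := ho.comp_tendsto (tendsto_ofReal_mul_comap_im_atTop (hγ_im s hs))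
    have h_inv : (fun R : ℝ => (R * γ s : ℂ)⁻¹) =O[atTop] fun R : ℝ => (R : ℂ)⁻¹ := by
      simpa only [mul_inv, mul_comm] using
        (isBigO_refl (fun R : ℝ => (R : ℂ)⁻¹) atTop).const_mul_left (γ s)⁻¹
    have h_smul := (isBigO_refl (fun R : ℝ => (R : ℂ)) atTop).smul_isLittleO
      (h_ray.trans_isBigO h_inv)
    refine (isLittleO_one_iff ℂ).1 (h_smul.congr' .rfl ?_)
    filter_upwards [eventually_ne_atTop 0] with R hR
    simp [hR]

lemma integral_neg_self_eq_sides_of_diffContOnCl (hg : DiffContOnCl ℂ g {z | 0 < z.im}) {R : ℝ}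
    (hR : 0 < R) :
    ∫ x in (-R)..R, g x =
      (∫ s in (-1 : ℝ)..1, (R : ℂ) • g (R * (s + I)))
        - I • (∫ s in (0 : ℝ)..1, (R : ℂ) • g (R * (1 + s * I)))
        + I • ∫ s in (0 : ℝ)..1, (R : ℂ) • g (R * (-1 + s * I)) := by
  have h_cont : ContinuousOn (fun z : ℂ => (R : ℂ) • g (R * z)) {z | 0 ≤ z.im} := by
    have hg_cont := hg.continuousOn
    rw [Complex.closure_setOfPred_lt_im] at hg_cont
    exact (hg_cont.comp (by fun_prop) fun z hz => by
      simpa using mul_nonneg hR.le hz).const_smul (R : ℂ)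
  have h_diff : DifferentiableOn ℂ (fun z : ℂ => (R : ℂ) • g (R * z)) {z | 0 < z.im} :=
    (hg.differentiableOn.comp (by fun_prop) fun z hz => ofReal_mul_im_pos hR hz).const_smul (R : ℂ)
  have goursat := Complex.integral_boundary_rect_eq_zero_of_continuousOn_of_differentiableOn
    (fun z : ℂ => (R : ℂ) • g (R * z)) (-1) (1 + I)
    (h_cont.mono fun z hz => by simpa using hz.2.1)
    (h_diff.mono fun z hz => by simpa using hz.2.1)
  have bottom : ∫ s in (-1 : ℝ)..1, (R : ℂ) • g (R * s) = ∫ x in (-R)..R, g x := by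
    simpa [intervalIntegral.integral_smul] using
      intervalIntegral.smul_integral_comp_mul_left (a := -1) (b := 1) (fun x : ℝ => g x) R
  simp only [Complex.neg_re, Complex.neg_im, Complex.add_re, Complex.add_im, Complex.one_re,
    Complex.one_im, Complex.I_re, Complex.I_im, neg_zero, add_zero, zero_add, zero_mul, one_mul,
    Complex.ofReal_zero, Complex.ofReal_one, Complex.ofReal_neg, bottom] at goursat
  rw [← sub_eq_zero, ← goursat]
  abel

/-- A form of **Jordan's lemma**. -/
theorem tendsto_integral_zero_of_isLittleO_inv (hg : DiffContOnCl ℂ g {z | 0 < z.im})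
    (hO : g =O[cobounded ℂ ⊓ 𝓟 {z | 0 < z.im}] (·⁻¹))
    (ho : g =o[comap Complex.im atTop] (·⁻¹)) :
    Tendsto (fun R : ℝ => ∫ x in (-R)..R, g x) atTop (𝓝 0) := by
  have side {γ : ℝ → ℂ} (hγ : Continuous γ) {a b : ℝ} (hγ_norm : ∀ s, 1 ≤ ‖γ s‖)
      (hγ_im : ∀ s ∈ uIoc a b, 0 < (γ s).im) :=
    tendsto_integral_dilation_zero hg.differentiableOn.continuousOn hO ho hγ.continuousOn
      (fun s _ => hγ_norm s) hγ_im
  have top := side (γ := fun s => s + I) (a := -1) (b := 1) (by fun_prop)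
    (fun s => by simpa using Complex.abs_im_le_norm (s + I)) (by simp)
  have right := side (γ := fun s => 1 + s * I) (a := 0) (b := 1) (by fun_prop)
    (fun s => by simpa using Complex.abs_re_le_norm (1 + s * I)) (by simp +contextual)
  have left := side (γ := fun s => -1 + s * I) (a := 0) (b := 1) (by fun_prop)
    (fun s => by simpa using Complex.abs_re_le_norm (-1 + s * I)) (by simp +contextual)
  have sides := (top.sub (right.const_smul I)).add (left.const_smul I)
  simp only [smul_zero, sub_zero, add_zero] at sides
  refine sides.congr' ?_
  filter_upwards [eventually_gt_atTop 0] with R hR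
    using (integral_neg_self_eq_sides_of_diffContOnCl hg hR).symm

end Jordan

section Kernel

lemma ofReal_sub_ne_zero {p : ℂ} (hp : p.im ≠ 0) (x : ℝ) : (x : ℂ) - p ≠ 0 :=
  fun h => hp <| by simpa using congrArg Complex.im h

lemma ofReal_sub_inv_sub_sub_neg_inv {p : ℂ} (hp : p.im ≠ 0) (x : ℝ) :
    ((x : ℂ) - p)⁻¹ - ((x : ℂ) - -p)⁻¹ = ((x : ℂ) - p)⁻¹ * (((x : ℂ) - -p)⁻¹ * (2 * p)) := by
  have h_sub := ofReal_sub_ne_zero hp x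
  have h_add := ofReal_sub_ne_zero (p := -p) (by simpa using hp) x
  rw [inv_sub_inv h_sub h_add]
  field_simp
  ring

lemma continuous_ofReal_sub_inv {p : ℂ} (hp : p.im ≠ 0) :
    Continuous fun x : ℝ => ((x : ℂ) - p)⁻¹ :=
  (by fun_prop : Continuous fun x : ℝ => (x : ℂ) - p).inv₀ (ofReal_sub_ne_zero hp)

lemma integral_ofReal_sub_inv {p : ℂ} (hp : p.im ≠ 0) (a b : ℝ) :
    ∫ x in a..b, ((x : ℂ) - p)⁻¹ = Complex.log (b - p) - Complex.log (a - p) := by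
  refine intervalIntegral.integral_eq_sub_of_hasDerivAt
    (f := fun x : ℝ => Complex.log (x - p)) (fun x _ => ?_)
    ((continuous_ofReal_sub_inv hp).intervalIntegrable _ _)
  have h_slit : (x : ℂ) - p ∈ Complex.slitPlane := .inr (by simpa using hp)
  simpa using ((hasDerivAt_id (x : ℂ)).sub_const p).clog h_slit |>.comp_ofReal

theorem tendsto_integral_ofReal_sub_inv_of_im_pos {p : ℂ} (hp : 0 < p.im) :
    Tendsto (fun R : ℝ => ∫ x in (-R)..R, ((x : ℂ) - p)⁻¹) atTop (𝓝 (π * I)) := by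
  have h_div : Tendsto (fun R : ℝ => p / R) atTop (𝓝 0) := by
    simpa [div_eq_mul_inv] using
      (tendsto_inv₀_cobounded.comp (RCLike.tendsto_ofReal_atTop_cobounded ℂ)).const_mul p
  have h_right : Tendsto (fun R : ℝ => Complex.log (1 - p / R)) atTop (𝓝 0) := by
    have h_one : Tendsto (fun R : ℝ => 1 - p / R) atTop (𝓝 1) := by simpa using h_div.const_sub 1
    simpa using h_one.clog Complex.one_mem_slitPlane
  have h_left : Tendsto (fun R : ℝ => Complex.log (-1 - p / R)) atTop (𝓝 (-(π * I))) := by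
    have h_neg_one : Tendsto (fun R : ℝ => -1 - p / R) atTop (𝓝[{z | z.im < 0}] (-1)) := by
      refine tendsto_nhdsWithin_iff.2 ⟨by simpa using h_div.const_sub (-1), ?_⟩
      filter_upwards [eventually_gt_atTop 0] with R hR
      simpa using div_pos hp hR
    have h_log := Complex.tendsto_log_nhdsWithin_im_neg_of_re_neg_of_im_zero (z := -1)
      (by simp) (by simp)
    simpa [Function.comp_def] using h_log.comp h_neg_one
  have h_sub := h_right.sub h_left
  rw [zero_sub, neg_neg] at h_sub
  refine h_sub.congr' ?_
  filter_upwards [eventually_gt_atTop 0] with R hR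
  have hR' : (R : ℂ) ≠ 0 := by exact_mod_cast hR.ne'
  have h_log {e : ℂ} (he : e.im = 0) :
      Complex.log (R * e - p) = Real.log R + Complex.log (e - p / R) := by
    rw [← Complex.log_ofReal_mul hR]
    · congr 1
      field_simp
    · intro h
      simpa [he, hR.ne', hp.ne'] using congrArg Complex.im h
  have h_log_right := h_log Complex.one_im
  have h_log_left := h_log (e := -1) (by simp)
  simp only [mul_one, mul_neg] at h_log_right h_log_left
  rw [integral_ofReal_sub_inv hp.ne', Complex.ofReal_neg, h_log_right, h_log_left]
  ring

lemma integral_neg_self_ofReal_sub_inv_smul {E : Type*} [NormedAddCommGroup E] [NormedSpace ℂ E]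
    (f : ℂ → E) (p : ℂ) (R : ℝ) :
    ∫ x in (-R)..R, ((x : ℂ) - p)⁻¹ • f x = -∫ x in (-R)..R, ((x : ℂ) - -p)⁻¹ • f (-x) := by
  have h := intervalIntegral.integral_comp_neg (a := -R) (b := R)
    fun x : ℝ => ((x : ℂ) - p)⁻¹ • f x
  rw [neg_neg] at h
  rw [← h, ← intervalIntegral.integral_neg]
  refine intervalIntegral.integral_congr fun x _ => ?_
  simp only [← neg_smul, ← inv_neg]
  rw [Complex.ofReal_neg]
  congr 2
  ring

lemma integral_neg_self_ofReal_sub_inv_neg (p : ℂ) (R : ℝ) :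
    ∫ x in (-R)..R, ((x : ℂ) - -p)⁻¹ = -∫ x in (-R)..R, ((x : ℂ) - p)⁻¹ := by
  simpa using integral_neg_self_ofReal_sub_inv_smul (fun _ => (1 : ℂ)) (-p) R

theorem tendsto_integral_ofReal_sub_inv {p : ℂ} (hp : p.im ≠ 0) :
    Tendsto (fun R : ℝ => ∫ x in (-R)..R, ((x : ℂ) - p)⁻¹) atTop
      (𝓝 (π * I * Real.sign p.im)) := by
  rcases hp.lt_or_gt with hp | hp
  · have h := (tendsto_integral_ofReal_sub_inv_of_im_pos (p := -p) (by simpa using hp)).neg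
    simpa only [integral_neg_self_ofReal_sub_inv_neg, neg_neg, Real.sign_of_neg hp,
      Complex.ofReal_neg, Complex.ofReal_one, mul_neg, mul_one] using h
  · simpa [Real.sign_of_pos hp] using tendsto_integral_ofReal_sub_inv_of_im_pos hp

lemma tendsto_integral_ofReal_sub_inv_sub_sub_inv_of_im_pos {p : ℂ} (hp : 0 < p.im) :
    Tendsto (fun R : ℝ => ∫ x in (-R)..R, (((x : ℂ) - p)⁻¹ - ((x : ℂ) - -p)⁻¹)) atTop
      (𝓝 (2 * π * I)) := by
  have hq : (-p).im ≠ 0 := by simpa using hp.ne'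
  have h_eq (R : ℝ) : ∫ x in (-R)..R, (((x : ℂ) - p)⁻¹ - ((x : ℂ) - -p)⁻¹) =
      2 * ∫ x in (-R)..R, ((x : ℂ) - p)⁻¹ := by
    rw [intervalIntegral.integral_sub ((continuous_ofReal_sub_inv hp.ne').intervalIntegrable _ _)
      ((continuous_ofReal_sub_inv hq).intervalIntegrable _ _),
      integral_neg_self_ofReal_sub_inv_neg]
    ring
  simpa only [h_eq, mul_assoc] using (tendsto_integral_ofReal_sub_inv_of_im_pos hp).const_mul 2

end Kernel

section CauchyFormula

variable {E : Type*} [NormedAddCommGroup E] [NormedSpace ℂ E] {f : ℂ → E} {p : ℂ}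

lemma isBigO_sub_const_inv_cobounded (p : ℂ) : (fun z => (z - p)⁻¹) =O[cobounded ℂ] (·⁻¹) :=
  (IsEquivalent.refl.sub_isLittleO (isLittleO_const_id_cobounded p)).inv.isBigO

lemma tendsto_integral_zero_of_eventuallyEq_sub_inv_smul {g : ℂ → E}
    (hg : DiffContOnCl ℂ g {z | 0 < z.im}) (hgf : g =ᶠ[cobounded ℂ] fun z => (z - p)⁻¹ • f z)
    (hO : f =O[cobounded ℂ ⊓ 𝓟 {z | 0 < z.im}] (1 : ℂ → ℂ))
    (ho : Tendsto f (comap Complex.im atTop) (𝓝 0)) :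
    Tendsto (fun R : ℝ => ∫ x in (-R)..R, g x) atTop (𝓝 0) := by
  have h_inv := isBigO_sub_const_inv_cobounded p
  refine tendsto_integral_zero_of_isLittleO_inv hg ?_ ?_
  · simpa using ((h_inv.mono inf_le_left).smul hO).congr' (hgf.symm.filter_mono inf_le_left) .rfl
  · simpa using ((h_inv.mono comap_im_atTop_le_cobounded).smul_isLittleO
      ((isLittleO_one_iff ℂ).2 ho)).congr' (hgf.symm.filter_mono comap_im_atTop_le_cobounded) .rfl

lemma diffContOnCl_sub_inv (hp : p.im < 0) :
    DiffContOnCl ℂ (fun z => (z - p)⁻¹) {z | 0 < z.im} := by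
  refine (by fun_prop : Differentiable ℂ fun z => z - p).diffContOnCl.inv fun z hz h => ?_
  rw [Complex.closure_setOfPred_lt_im, sub_eq_zero.1 h] at hz
  exact hp.not_ge hz

theorem tendsto_integral_sub_inv_smul_of_im_neg (hf : DiffContOnCl ℂ f {z | 0 < z.im})
    (hO : f =O[cobounded ℂ ⊓ 𝓟 {z | 0 < z.im}] (1 : ℂ → ℂ))
    (ho : Tendsto f (comap Complex.im atTop) (𝓝 0)) (hp : p.im < 0) :
    Tendsto (fun R : ℝ => ∫ x in (-R)..R, ((x : ℂ) - p)⁻¹ • f x) atTop (𝓝 0) :=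
  tendsto_integral_zero_of_eventuallyEq_sub_inv_smul
    ((diffContOnCl_sub_inv hp).smul hf) .rfl hO ho

variable [CompleteSpace E]

lemma diffContOnCl_dslope {s : Set ℂ} (hf : DiffContOnCl ℂ f s) (hs : s ∈ 𝓝 p) :
    DiffContOnCl ℂ (dslope f p) s where
  differentiableOn := (Complex.differentiableOn_dslope hs).2 hf.differentiableOn
  continuousOn := (continuousOn_dslope (mem_of_superset hs subset_closure)).2
    ⟨hf.continuousOn, hf.differentiableAt' hs⟩

lemma tendsto_integral_sub_inv_smul_of_eq_zero (hf : DiffContOnCl ℂ f {z | 0 < z.im})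
    (hO : f =O[cobounded ℂ ⊓ 𝓟 {z | 0 < z.im}] (1 : ℂ → ℂ))
    (ho : Tendsto f (comap Complex.im atTop) (𝓝 0)) (hp : 0 < p.im) (hfp : f p = 0) :
    Tendsto (fun R : ℝ => ∫ x in (-R)..R, ((x : ℂ) - p)⁻¹ • f x) atTop (𝓝 0) := by
  have dslope_eq {z : ℂ} (hz : z ≠ p) : dslope f p z = (z - p)⁻¹ • f z := by
    rw [dslope_of_ne _ hz, slope_def_module, hfp, sub_zero]
  have h_dslope : DiffContOnCl ℂ (dslope f p) {z | 0 < z.im} :=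
    diffContOnCl_dslope hf ((isOpen_lt continuous_const Complex.continuous_im).mem_nhds hp)
  have h_far : dslope f p =ᶠ[cobounded ℂ] fun z => (z - p)⁻¹ • f z := by
    filter_upwards [eventually_ne_cobounded p] with z hz using dslope_eq hz
  have h_real (x : ℝ) : dslope f p x = ((x : ℂ) - p)⁻¹ • f x :=
    dslope_eq <| sub_ne_zero.1 <| ofReal_sub_ne_zero hp.ne' x
  simpa only [h_real] using
    tendsto_integral_zero_of_eventuallyEq_sub_inv_smul h_dslope h_far hO ho

theorem tendsto_integral_sub_inv_smul_of_im_pos (hf : DiffContOnCl ℂ f {z | 0 < z.im})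
    (hO : f =O[cobounded ℂ ⊓ 𝓟 {z | 0 < z.im}] (1 : ℂ → ℂ))
    (ho : Tendsto f (comap Complex.im atTop) (𝓝 0)) (hp : 0 < p.im) :
    Tendsto (fun R : ℝ => ∫ x in (-R)..R, ((x : ℂ) - p)⁻¹ • f x) atTop
      (𝓝 ((2 * π * I) • f p)) := by
  have hq : (-p).im < 0 := by simpa using hp
  let c : ℂ → E := fun z => (z - -p)⁻¹ • (2 * p) • f p
  have hc : DiffContOnCl ℂ c {z | 0 < z.im} := (diffContOnCl_sub_inv hq).smul_const _
  have hc_far : Tendsto c (cobounded ℂ) (𝓝 0) := by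
    simpa [c] using ((isBigO_sub_const_inv_cobounded (-p)).trans_tendsto
      tendsto_inv₀_cobounded).smul_const ((2 * p) • f p)
  have hcp : c p = f p := by
    have h2p : 2 * p ≠ 0 := mul_ne_zero two_ne_zero fun h => by simp [h] at hp
    simp only [c, sub_neg_eq_add, ← two_mul, inv_smul_smul₀ h2p]
  have h_zero := tendsto_integral_sub_inv_smul_of_eq_zero (hf.sub hc)
    (hO.sub ((hc_far.isBigO_one ℂ).mono inf_le_left))
    (by simpa using! ho.sub (hc_far.mono_left comap_im_atTop_le_cobounded)) hp
    (sub_eq_zero.2 hcp.symm)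
  have h_kernel := (tendsto_integral_ofReal_sub_inv_sub_sub_inv_of_im_pos hp).smul_const (f p)
  have h_split (x : ℝ) : ((x : ℂ) - p)⁻¹ • f x = ((x : ℂ) - p)⁻¹ • (f - c) x +
      (((x : ℂ) - p)⁻¹ - ((x : ℂ) - -p)⁻¹) • f p := by
    rw [ofReal_sub_inv_sub_sub_neg_inv hp.ne', Pi.sub_apply, smul_sub]
    simp only [c, mul_smul, sub_add_cancel]
  have h_cont : Continuous fun x : ℝ => ((x : ℂ) - p)⁻¹ • (f - c) x :=
    (continuous_ofReal_sub_inv hp.ne').smul <|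
      (hf.sub hc).continuousOn.comp_continuous Complex.continuous_ofReal fun x => by
        simp [Complex.closure_setOfPred_lt_im]
  have h_cont_kernel : Continuous fun x : ℝ => (((x : ℂ) - p)⁻¹ - ((x : ℂ) - -p)⁻¹) • f p :=
    ((continuous_ofReal_sub_inv hp.ne').sub (continuous_ofReal_sub_inv hq.ne)).smul continuous_const
  rw [← zero_add ((2 * π * I) • f p)]
  refine (h_zero.add h_kernel).congr fun R => ?_
  rw [← intervalIntegral.integral_smul_const, ← intervalIntegral.integral_add
    (h_cont.intervalIntegrable _ _) (h_cont_kernel.intervalIntegrable _ _)]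
  simp only [h_split]

end CauchyFormula

section Exponential

lemma norm_exp_ofReal_mul_mul_I (a : ℝ) (z : ℂ) :
    ‖Complex.exp (a * z * I)‖ = Real.exp (-(a * z.im)) := by
  simp [Complex.norm_exp]

variable {a : ℝ}

lemma isBigO_exp_ofReal_mul_mul_I (ha : 0 ≤ a) :
    (fun z => Complex.exp (a * z * I)) =O[𝓟 {z | 0 < z.im}] (1 : ℂ → ℂ) := by
  refine IsBigO.of_bound 1 (eventually_principal.2 fun z hz => ?_)
  simpa [norm_exp_ofReal_mul_mul_I] using mul_nonneg ha (le_of_lt hz)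

lemma tendsto_exp_ofReal_mul_mul_I_comap_im_atTop (ha : 0 < a) :
    Tendsto (fun z => Complex.exp (a * z * I)) (comap Complex.im atTop) (𝓝 0) := by
  rw [tendsto_zero_iff_norm_tendsto_zero]
  simp only [norm_exp_ofReal_mul_mul_I]
  exact Real.tendsto_exp_neg_atTop_nhds_zero.comp (tendsto_comap.const_mul_atTop ha)

theorem tendsto_integral_exp_mul_I_div_sub_of_pos (ha : 0 < a) {p : ℂ} (hp : p.im ≠ 0) :
    Tendsto (fun R : ℝ => ∫ x in (-R)..R, Complex.exp (a * x * I) / (x - p)) atTop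
      (𝓝 (π * I * (1 + Real.sign p.im) * Complex.exp (a * p * I))) := by
  have hf : DiffContOnCl ℂ (fun z => Complex.exp (a * z * I)) {z | 0 < z.im} :=
    Differentiable.diffContOnCl (by fun_prop)
  have hO := (isBigO_exp_ofReal_mul_mul_I ha.le).mono (inf_le_right (a := cobounded ℂ))
  have ho := tendsto_exp_ofReal_mul_mul_I_comap_im_atTop ha
  simp only [div_eq_inv_mul, ← smul_eq_mul (α := ℂ) (_ ⁻¹)]
  rcases hp.lt_or_gt with hp | hp
  · simpa [Real.sign_of_neg hp] using tendsto_integral_sub_inv_smul_of_im_neg hf hO ho hp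
  · convert tendsto_integral_sub_inv_smul_of_im_pos hf hO ho hp using 2
    rw [Real.sign_of_pos hp, smul_eq_mul]
    push_cast
    ring

end Exponential

theorem stmt_2_general (t : ℝ) {p : ℂ} (hp : p.im ≠ 0) :
    Tendsto (fun R : ℝ => ∫ x in (-R)..R, Complex.exp (2 * π * t * x * I) / (x - p)) atTop
      (𝓝 (π * I * (Real.sign t + Real.sign p.im) * Complex.exp (2 * π * t * p * I))) := by
  rcases lt_trichotomy t 0 with ht | rfl | ht
  · have h_exp (z : ℂ) : 2 * π * t * -z * I = ((2 * π * -t : ℝ) : ℂ) * z * I := by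
      push_cast
      ring
    have h_reflect (R : ℝ) := integral_neg_self_ofReal_sub_inv_smul
      (fun z => Complex.exp (2 * π * t * z * I)) p R
    simp only [smul_eq_mul, ← div_eq_inv_mul, h_exp] at h_reflect
    simp only [h_reflect]
    convert (tendsto_integral_exp_mul_I_div_sub_of_pos (mul_pos two_pi_pos (neg_pos.2 ht))
      (p := -p) (by simpa using hp)).neg using 2
    rw [← h_exp, neg_neg, Real.sign_of_neg ht, Complex.neg_im, Real.sign_neg]
    push_cast
    ring
  · simpa using tendsto_integral_ofReal_sub_inv hp
  · simpa [Real.sign_of_pos ht] using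
      tendsto_integral_exp_mul_I_div_sub_of_pos (mul_pos two_pi_pos ht) hp

theorem stmt_2 (k t : ℝ) (hk : 0 < k) (ht : t ≠ 0) :
    Tendsto
      (fun R : ℝ => ∫ x in (-R)..R,
        Complex.exp (2 * π * t * x * Complex.I) / ((x : ℂ) - k * Complex.I))
      atTop
      (nhds (if 0 < t then 2 * π * Complex.I * (Real.exp (-(2 * π * k * t)) : ℂ) else 0)) := by
  have h_exp : 2 * π * t * (k * I) * I = ((-(2 * π * k * t) : ℝ) : ℂ) := by
    push_cast
    linear_combination 2 * π * t * k * Complex.I_sq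
  have h_im : (k * I : ℂ).im = k := by simp
  convert stmt_2_general t (p := k * I) (h_im.trans_ne hk.ne') using 2
  rw [h_exp, ← Complex.ofReal_exp, h_im, Real.sign_of_pos hk]
  rcases ht.lt_or_gt with ht | ht
  · simp [ht.not_gt, Real.sign_of_neg ht]
  · rw [if_pos ht, Real.sign_of_pos ht]
    push_cast
    ring
end

section
/- Let η : ℝ → ℂ be a smooth (C^∞) function with support contained in [−2, 2]. There exists a constant C > 0 (depending only on η) such that for every a ≥ 0 and every τ ≠ 0, the function θ_a(t) = η(t)·e^{2a·min(t,0)} satisfies both |∫_ℝ e^{−itτ} θ_a(t) dt| ≤ C/|τ| and |∫_ℝ e^{−itτ} θ_a(t) dt| ≤ C(1 + a)/τ². -/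
open MeasureTheory Real

/-!
Substituting `s ↦ -s` on the positive half-line turns the integral into the sum of two one-sided
Laplace transforms `∫_{s ≤ 0} e^{zs} f(s) ds`, taken at `z = 2a - iτ` for `η` and at `w = iτ` for
its reflection. As `Re z, Re w ≥ 0` the exponentials are bounded by `1`, and each integration by
parts gains a factor `1 / |τ|`. The kernel has a kink at `0`, so the boundary terms of the first
integration by parts do not cancel: they add up to `(1/z + 1/w) η(0) = 2a / (zw) · η(0)`, which is
of order `a / τ²`.
-/

open Set

lemma norm_inv_add_inv_le {𝕜 : Type*} [NormedField 𝕜] {x y : 𝕜} {ρ : ℝ} (hρ : 0 < ρ)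
    (hx : ρ ≤ ‖x‖) (hy : ρ ≤ ‖y‖) : ‖x⁻¹ + y⁻¹‖ ≤ ‖x + y‖ / ρ ^ 2 := by
  have hx₀ : x ≠ 0 := norm_pos_iff.1 (hρ.trans_le hx)
  have hy₀ : y ≠ 0 := norm_pos_iff.1 (hρ.trans_le hy)
  rw [inv_add_inv hx₀ hy₀, norm_div, norm_mul, sq]
  gcongr

lemma hasDerivAt_comp_neg {𝕜 F : Type*} [NontriviallyNormedField 𝕜] [NormedAddCommGroup F]
    [NormedSpace 𝕜 F] {f : 𝕜 → F} {f' : F} {x : 𝕜} (hf : HasDerivAt f f' (-x)) :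
    HasDerivAt (fun x ↦ f (-x)) (-f') x := by
  simpa only [zero_sub] using HasDerivAt.comp_const_sub 0 x ((zero_sub x).symm ▸ hf)

lemma setIntegral_Iic_zero_add_comp_neg {E : Type*} [NormedAddCommGroup E] [NormedSpace ℝ E]
    {f : ℝ → E} (hf : Integrable f) :
    (∫ s in Iic (0 : ℝ), f s) + ∫ s in Iic (0 : ℝ), f (-s) = ∫ s, f s := by
  rw [integral_comp_neg_Iic, neg_zero]
  exact intervalIntegral.integral_Iic_add_Ioi hf.integrableOn hf.integrableOn

section LeftLaplace

variable {E : Type*} [NormedAddCommGroup E] [NormedSpace ℂ E] {f f' : ℝ → E} {z : ℂ}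

/-- The Laplace transform of `f` over the negative half-line. The sign of the exponent is chosen so
that the integrand decays for `0 < z.re`. -/
noncomputable def leftLaplace (f : ℝ → E) (z : ℂ) : E :=
  ∫ s in Iic (0 : ℝ), Complex.exp (z * s) • f s

lemma norm_cexp_smul_le (hz : 0 ≤ z.re) {s : ℝ} (hs : s ≤ 0) (x : E) :
    ‖Complex.exp (z * s) • x‖ ≤ ‖x‖ := by
  rw [norm_smul, Complex.norm_exp, Complex.re_mul_ofReal]
  exact mul_le_of_le_one_left (norm_nonneg x)
    (Real.exp_le_one_iff.2 (mul_nonpos_of_nonneg_of_nonpos hz hs))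

lemma integrableOn_cexp_smul (hz : 0 ≤ z.re) (hf : IntegrableOn f (Iic 0)) :
    IntegrableOn (fun s : ℝ ↦ Complex.exp (z * s) • f s) (Iic 0) := by
  have hexp : Continuous fun s : ℝ ↦ Complex.exp (z * s) := by fun_prop
  refine Integrable.mono hf (hexp.aestronglyMeasurable.smul hf.aestronglyMeasurable) ?_
  filter_upwards [ae_restrict_mem measurableSet_Iic] with s hs using norm_cexp_smul_le hz hs (f s)

lemma norm_leftLaplace_le (hz : 0 ≤ z.re) (hf : IntegrableOn f (Iic 0)) :
    ‖leftLaplace f z‖ ≤ ∫ s in Iic (0 : ℝ), ‖f s‖ :=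
  (norm_integral_le_integral_norm _).trans <|
    setIntegral_mono_on (integrableOn_cexp_smul hz hf).norm hf.norm measurableSet_Iic
      fun s hs ↦ norm_cexp_smul_le hz hs (f s)

lemma leftLaplace_neg : leftLaplace (fun s ↦ -f s) z = -leftLaplace f z := by
  simp only [leftLaplace, smul_neg, integral_neg]

lemma leftLaplace_eq_inv_smul_sub [CompleteSpace E] (hz : 0 ≤ z.re) (hz₀ : z ≠ 0)
    (hderiv : ∀ s ∈ Iic (0 : ℝ), HasDerivAt f (f' s) s)
    (hf : IntegrableOn f (Iic 0)) (hf' : IntegrableOn f' (Iic 0)) :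
    leftLaplace f z = z⁻¹ • (f 0 - leftLaplace f' z) := by
  have hexp (s : ℝ) :
      HasDerivAt (fun s : ℝ ↦ Complex.exp (z * s)) (Complex.exp (z * s) * z) s := by
    simpa using ((hasDerivAt_id (s : ℂ)).const_mul z).cexp.comp_ofReal
  have hprod : ∀ s ∈ Iic (0 : ℝ), HasDerivAt (fun s : ℝ ↦ Complex.exp (z * s) • f s)
      (Complex.exp (z * s) • f' s + z • Complex.exp (z * s) • f s) s := fun s hs ↦ by
    simpa only [smul_smul, mul_comm z] using (hexp s).fun_smul (hderiv s hs)
  have hint := integrableOn_cexp_smul hz hf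
  have hint' := integrableOn_cexp_smul hz hf'
  have hvanish := tendsto_zero_of_hasDerivAt_of_integrableOn_Iic hprod
    (hint'.add (hint.smul z)) hint
  have hsum : leftLaplace f' z + z • leftLaplace f z = f 0 := by
    have hFTC := integral_Iic_of_hasDerivAt_of_tendsto' hprod (hint'.add (hint.smul z)) hvanish
    rw [integral_add hint' (hint.fun_smul z), integral_smul] at hFTC
    simpa [leftLaplace] using hFTC
  rw [← hsum, add_sub_cancel_left, inv_smul_smul₀ hz₀]

lemma norm_leftLaplace_le_div [CompleteSpace E] {ρ : ℝ} (hρ : 0 < ρ) (hz : 0 ≤ z.re)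
    (hρz : ρ ≤ ‖z‖) (hderiv : ∀ s ∈ Iic (0 : ℝ), HasDerivAt f (f' s) s)
    (hf : IntegrableOn f (Iic 0)) (hf' : IntegrableOn f' (Iic 0)) :
    ‖leftLaplace f z‖ ≤ (‖f 0‖ + ∫ s in Iic (0 : ℝ), ‖f' s‖) / ρ := by
  have hz₀ : z ≠ 0 := norm_pos_iff.1 (hρ.trans_le hρz)
  rw [leftLaplace_eq_inv_smul_sub hz hz₀ hderiv hf hf', norm_smul, norm_inv, inv_mul_eq_div]
  gcongr
  exact (norm_sub_le _ _).trans (by gcongr; exact norm_leftLaplace_le hz hf')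

end LeftLaplace

section TwoSided

variable {E : Type*} [NormedAddCommGroup E] [NormedSpace ℂ E] {f f' f'' : ℝ → E} {z w : ℂ} {ρ : ℝ}

/-- The kernel equal to `exp (z * s)` for `s ≤ 0` and to `exp (-w * s)` for `0 ≤ s`; it is bounded
when `z` and `w` have nonnegative real part. -/
noncomputable def twoSidedExp (z w : ℂ) (s : ℝ) : ℂ :=
  Complex.exp (z * (min s 0 : ℝ) - w * (max s 0 : ℝ))

lemma twoSidedExp_of_nonpos {s : ℝ} (hs : s ≤ 0) : twoSidedExp z w s = Complex.exp (z * s) := by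
  simp [twoSidedExp, hs]

lemma twoSidedExp_neg (s : ℝ) : twoSidedExp z w (-s) = twoSidedExp w z s := by
  have hmin : min (-s) 0 = -max s 0 := by simpa using min_neg_neg s 0
  have hmax : max (-s) 0 = -min s 0 := by simpa using max_neg_neg s 0
  rw [twoSidedExp, twoSidedExp, hmin, hmax]
  push_cast
  ring_nf

lemma continuous_twoSidedExp : Continuous (twoSidedExp z w) := by
  unfold twoSidedExp
  fun_prop

lemma norm_twoSidedExp_le_one (hz : 0 ≤ z.re) (hw : 0 ≤ w.re) (s : ℝ) :
    ‖twoSidedExp z w s‖ ≤ 1 := by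
  rw [twoSidedExp, Complex.norm_exp, Real.exp_le_one_iff, Complex.sub_re, Complex.re_mul_ofReal,
    Complex.re_mul_ofReal, sub_nonpos]
  exact (mul_nonpos_of_nonneg_of_nonpos hz (min_le_right s 0)).trans
    (mul_nonneg hw (le_max_right s 0))

lemma twoSidedExp_eq_cexp_mul_exp_min (a τ s : ℝ) :
    twoSidedExp (2 * a - τ * Complex.I) (τ * Complex.I) s =
      Complex.exp (-(s * τ) * Complex.I) * (Real.exp (2 * a * min s 0) : ℂ) := by
  have hsplit : (s : ℂ) = (min s 0 : ℝ) + (max s 0 : ℝ) := by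
    rw [← Complex.ofReal_add, min_add_max, add_zero]
  rw [twoSidedExp, Complex.ofReal_exp, ← Complex.exp_add]
  congr 1
  push_cast at hsplit ⊢
  linear_combination (τ * Complex.I) * hsplit

lemma integrable_twoSidedExp_smul (hz : 0 ≤ z.re) (hw : 0 ≤ w.re) (hf : Integrable f) :
    Integrable fun s ↦ twoSidedExp z w s • f s :=
  hf.bdd_smul 1 continuous_twoSidedExp.aestronglyMeasurable
    (.of_forall (norm_twoSidedExp_le_one hz hw))

lemma integral_twoSidedExp_smul (hz : 0 ≤ z.re) (hw : 0 ≤ w.re) (hf : Integrable f) :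
    ∫ s, twoSidedExp z w s • f s = leftLaplace f z + leftLaplace (fun s ↦ f (-s)) w := by
  rw [← setIntegral_Iic_zero_add_comp_neg (integrable_twoSidedExp_smul hz hw hf)]
  simp only [twoSidedExp_neg]
  congr 1 <;> exact setIntegral_congr_fun measurableSet_Iic fun s hs ↦ by
    simp only [twoSidedExp_of_nonpos hs]

variable [CompleteSpace E]

lemma norm_leftLaplace_add_norm_leftLaplace_comp_neg_le (hρ : 0 < ρ)
    (hz : 0 ≤ z.re) (hw : 0 ≤ w.re) (hρz : ρ ≤ ‖z‖) (hρw : ρ ≤ ‖w‖)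
    (hderiv : ∀ s, HasDerivAt f (f' s) s) (hf : Integrable f) (hf' : Integrable f') :
    ‖leftLaplace f z‖ + ‖leftLaplace (fun s ↦ f (-s)) w‖ ≤ (2 * ‖f 0‖ + ∫ s, ‖f' s‖) / ρ := by
  have hleft := norm_leftLaplace_le_div hρ hz hρz (fun s _ ↦ hderiv s)
    hf.integrableOn hf'.integrableOn
  have hright := norm_leftLaplace_le_div hρ hw hρw (fun s _ ↦ hasDerivAt_comp_neg (hderiv (-s)))
    hf.comp_neg.integrableOn hf'.comp_neg.neg.integrableOn
  simp only [norm_neg, neg_zero] at hright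
  calc ‖leftLaplace f z‖ + ‖leftLaplace (fun s ↦ f (-s)) w‖
    _ ≤ (‖f 0‖ + ∫ s in Iic (0 : ℝ), ‖f' s‖) / ρ + (‖f 0‖ + ∫ s in Iic (0 : ℝ), ‖f' (-s)‖) / ρ :=
      add_le_add hleft hright
    _ = (2 * ‖f 0‖ + ∫ s, ‖f' s‖) / ρ := by
      rw [← setIntegral_Iic_zero_add_comp_neg hf'.norm]
      ring

theorem norm_integral_twoSidedExp_smul_le_div (hρ : 0 < ρ)
    (hz : 0 ≤ z.re) (hw : 0 ≤ w.re) (hρz : ρ ≤ ‖z‖) (hρw : ρ ≤ ‖w‖)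
    (hderiv : ∀ s, HasDerivAt f (f' s) s) (hf : Integrable f) (hf' : Integrable f') :
    ‖∫ s, twoSidedExp z w s • f s‖ ≤ (2 * ‖f 0‖ + ∫ s, ‖f' s‖) / ρ := by
  rw [integral_twoSidedExp_smul hz hw hf]
  exact (norm_add_le _ _).trans
    (norm_leftLaplace_add_norm_leftLaplace_comp_neg_le hρ hz hw hρz hρw hderiv hf hf')

lemma integral_twoSidedExp_smul_eq_inv_smul
    (hz : 0 ≤ z.re) (hw : 0 ≤ w.re) (hz₀ : z ≠ 0) (hw₀ : w ≠ 0)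
    (hderiv : ∀ s, HasDerivAt f (f' s) s) (hf : Integrable f) (hf' : Integrable f') :
    ∫ s, twoSidedExp z w s • f s = (z⁻¹ + w⁻¹) • f 0 +
      (w⁻¹ • leftLaplace (fun s ↦ f' (-s)) w - z⁻¹ • leftLaplace f' z) := by
  rw [integral_twoSidedExp_smul hz hw hf,
    leftLaplace_eq_inv_smul_sub hz hz₀ (fun s _ ↦ hderiv s) hf.integrableOn hf'.integrableOn,
    leftLaplace_eq_inv_smul_sub hw hw₀ (fun s _ ↦ hasDerivAt_comp_neg (hderiv (-s)))
      hf.comp_neg.integrableOn hf'.comp_neg.neg.integrableOn,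
    leftLaplace_neg, neg_zero]
  module

theorem norm_integral_twoSidedExp_smul_le_div_sq (hρ : 0 < ρ)
    (hz : 0 ≤ z.re) (hw : 0 ≤ w.re) (hρz : ρ ≤ ‖z‖) (hρw : ρ ≤ ‖w‖)
    (hderiv : ∀ s, HasDerivAt f (f' s) s) (hderiv' : ∀ s, HasDerivAt f' (f'' s) s)
    (hf : Integrable f) (hf' : Integrable f') (hf'' : Integrable f'') :
    ‖∫ s, twoSidedExp z w s • f s‖ ≤
      (‖z + w‖ * ‖f 0‖ + 2 * ‖f' 0‖ + ∫ s, ‖f'' s‖) / ρ ^ 2 := by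
  have hz₀ : z ≠ 0 := norm_pos_iff.1 (hρ.trans_le hρz)
  have hw₀ : w ≠ 0 := norm_pos_iff.1 (hρ.trans_le hρw)
  have inv_smul_le {u : ℂ} (hu : ρ ≤ ‖u‖) (x : E) : ‖u⁻¹ • x‖ ≤ ‖x‖ / ρ := by
    rw [norm_smul, norm_inv, inv_mul_eq_div]
    gcongr
  have hkink : ‖(z⁻¹ + w⁻¹) • f 0‖ ≤ ‖z + w‖ / ρ ^ 2 * ‖f 0‖ := by
    rw [norm_smul]
    gcongr
    exact norm_inv_add_inv_le hρ hρz hρw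
  have hrem : ‖w⁻¹ • leftLaplace (fun s ↦ f' (-s)) w - z⁻¹ • leftLaplace f' z‖ ≤
      (2 * ‖f' 0‖ + ∫ s, ‖f'' s‖) / ρ / ρ :=
    calc _ ≤ ‖leftLaplace (fun s ↦ f' (-s)) w‖ / ρ + ‖leftLaplace f' z‖ / ρ :=
          (norm_sub_le _ _).trans (add_le_add (inv_smul_le hρw _) (inv_smul_le hρz _))
      _ = (‖leftLaplace f' z‖ + ‖leftLaplace (fun s ↦ f' (-s)) w‖) / ρ := by ring
      _ ≤ (2 * ‖f' 0‖ + ∫ s, ‖f'' s‖) / ρ / ρ := by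
          gcongr
          exact norm_leftLaplace_add_norm_leftLaplace_comp_neg_le hρ hz hw hρz hρw
            hderiv' hf' hf''
  rw [integral_twoSidedExp_smul_eq_inv_smul hz hw hz₀ hw₀ hderiv hf hf']
  calc _ ≤ ‖z + w‖ / ρ ^ 2 * ‖f 0‖ + (2 * ‖f' 0‖ + ∫ s, ‖f'' s‖) / ρ / ρ :=
        (norm_add_le _ _).trans (add_le_add hkink hrem)
    _ = (‖z + w‖ * ‖f 0‖ + 2 * ‖f' 0‖ + ∫ s, ‖f'' s‖) / ρ ^ 2 := by ring

end TwoSided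

theorem stmt_4_general {E : Type*} [NormedAddCommGroup E] [NormedSpace ℂ E] [CompleteSpace E]
    {η η' η'' : ℝ → E} (hη : ∀ s, HasDerivAt η (η' s) s) (hη' : ∀ s, HasDerivAt η' (η'' s) s)
    (hint : Integrable η) (hint' : Integrable η') (hint'' : Integrable η'') :
    ∃ C : ℝ, 0 < C ∧ ∀ a : ℝ, 0 ≤ a → ∀ τ : ℝ, τ ≠ 0 →
      ‖∫ s : ℝ, Complex.exp (-(s * τ) * Complex.I) •
          (Real.exp (2 * a * min s 0) : ℂ) • η s‖ ≤ C / |τ| ∧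
      ‖∫ s : ℝ, Complex.exp (-(s * τ) * Complex.I) •
          (Real.exp (2 * a * min s 0) : ℂ) • η s‖ ≤ C * (1 + a) / τ ^ 2 := by
  have hI' : 0 ≤ ∫ s, ‖η' s‖ := integral_nonneg fun _ ↦ norm_nonneg _
  have hI'' : 0 ≤ ∫ s, ‖η'' s‖ := integral_nonneg fun _ ↦ norm_nonneg _
  refine ⟨2 * ‖η 0‖ + (∫ s, ‖η' s‖) + 2 * ‖η' 0‖ + (∫ s, ‖η'' s‖) + 1, by positivity,
    fun a ha τ hτ ↦ ?_⟩
  simp only [smul_smul, ← twoSidedExp_eq_cexp_mul_exp_min]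
  set z : ℂ := 2 * a - τ * Complex.I with hz
  set w : ℂ := τ * Complex.I with hw
  have hzre : 0 ≤ z.re := by simpa [hz, hw] using ha
  have hwre : 0 ≤ w.re := by simp [hw]
  have hτz : |τ| ≤ ‖z‖ := by simpa [hz, hw] using Complex.abs_im_le_norm z
  have hτw : |τ| ≤ ‖w‖ := by simp [hw]
  have hzw : ‖z + w‖ = 2 * a := by simp [hz, abs_of_nonneg ha]
  constructor
  · refine (norm_integral_twoSidedExp_smul_le_div (abs_pos.2 hτ) hzre hwre hτz hτw
      hη hint hint').trans (div_le_div_of_nonneg_right ?_ (abs_nonneg τ))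
    linarith [norm_nonneg (η' 0)]
  · refine (norm_integral_twoSidedExp_smul_le_div_sq (abs_pos.2 hτ) hzre hwre hτz hτw
      hη hη' hint hint' hint'').trans ?_
    rw [hzw, sq_abs]
    gcongr
    nlinarith [norm_nonneg (η 0), norm_nonneg (η' 0), mul_nonneg ha (norm_nonneg (η' 0)),
      mul_nonneg ha hI', mul_nonneg ha hI'']

theorem stmt_4 (η : ℝ → ℂ) (hη : ContDiff ℝ (⊤ : ℕ∞) η)
    (hsupp : Function.support η ⊆ Set.Icc (-2) 2) :
    ∃ C : ℝ, 0 < C ∧ ∀ a : ℝ, 0 ≤ a → ∀ τ : ℝ, τ ≠ 0 →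
      ‖∫ s : ℝ, Complex.exp (-(s * τ) * Complex.I) *
          (η s * (Real.exp (2 * a * min s 0) : ℂ))‖ ≤ C / |τ| ∧
      ‖∫ s : ℝ, Complex.exp (-(s * τ) * Complex.I) *
          (η s * (Real.exp (2 * a * min s 0) : ℂ))‖ ≤ C * (1 + a) / τ ^ 2 := by
  have hcomp : HasCompactSupport η := .of_support_subset_isCompact isCompact_Icc hsupp
  obtain ⟨hd, hη'⟩ := contDiff_infty_iff_deriv.1 hη
  obtain ⟨hd', hη''⟩ := contDiff_infty_iff_deriv.1 hη'
  simpa only [smul_eq_mul, mul_comm (η _)] using stmt_4_general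
    (fun s ↦ (hd s).hasDerivAt) (fun s ↦ (hd' s).hasDerivAt)
    (hη.continuous.integrable_of_hasCompactSupport hcomp)
    (hη'.continuous.integrable_of_hasCompactSupport hcomp.deriv)
    (hη''.continuous.integrable_of_hasCompactSupport hcomp.deriv.deriv)
end

section
/- Let N ≥ 1 and let ξ ∈ ℝ with |ξ| ≤ 1/2. Then: (i) the set K = {ξ₁ ∈ ℝ : ξ₁ ∈ [−N−2, −N] and ξ − ξ₁ ∈ [N, N+2]} has Lebesgue measure 2 − |ξ| ≥ 3/2; (ii) for every ξ₁ ∈ K one has 3N²|ξ| ≤ |3ξ·ξ₁·(ξ − ξ₁)| ≤ 3(N+2)²|ξ|; and (iii) for every p > 0 and every ξ₁ ∈ K one has N^p ≤ |ξ₁|^p + |ξ − ξ₁|^p − |ξ|^p ≤ 2(N+2)^p. -/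
open MeasureTheory Real

/-!
The two constraints on `ξ₁` are intervals of length `L`, translates of each other by `ξ`: they
overlap in length `L - |ξ|`, or not at all. On the overlap `ξ₁ ≤ 0 ≤ ξ - ξ₁`, both of size between
`N` and `N + L`, which bounds the product. Opposite signs also give `|ξ| ≤ max |ξ₁| |ξ - ξ₁|`, so
`|ξ| ^ p` cancels at most the larger of `|ξ₁| ^ p` and `|ξ - ξ₁| ^ p`, and the smaller one, at least
`N ^ p`, survives.
-/

section OppositeSigns

lemma abs_add_le_max_abs_of_nonpos_of_nonneg {G : Type*} [AddCommGroup G] [LinearOrder G]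
    [IsOrderedAddMonoid G] {x y : G} (hx : x ≤ 0) (hy : 0 ≤ y) : |x + y| ≤ max |x| |y| := by
  rw [add_comm, ← sub_neg_eq_add]
  exact abs_sub_le_of_nonneg_of_le hy ((le_abs_self y).trans (le_max_right _ _))
    (neg_nonneg.2 hx) ((neg_le_abs x).trans (le_max_left _ _))

variable {x y p : ℝ}

lemma abs_add_rpow_le_max_of_nonpos_of_nonneg (hx : x ≤ 0) (hy : 0 ≤ y) (hp : 0 ≤ p) :
    |x + y| ^ p ≤ max (|x| ^ p) (|y| ^ p) :=
  (le_max_iff.1 (abs_add_le_max_abs_of_nonpos_of_nonneg hx hy)).elim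
    (fun h ↦ le_max_of_le_left (rpow_le_rpow (abs_nonneg _) h hp))
    (fun h ↦ le_max_of_le_right (rpow_le_rpow (abs_nonneg _) h hp))

lemma min_rpow_le_rpow_add_rpow_sub_abs_add_rpow (hx : x ≤ 0) (hy : 0 ≤ y) (hp : 0 ≤ p) :
    min (|x| ^ p) (|y| ^ p) ≤ |x| ^ p + |y| ^ p - |x + y| ^ p := by
  rw [← min_add_max (|x| ^ p)]
  linarith [abs_add_rpow_le_max_of_nonpos_of_nonneg hx hy hp]

end OppositeSigns

/-- The set `K` of frequencies `ξ₁` for which `ξ = ξ₁ + (ξ - ξ₁)` splits the output frequency `ξ`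
into a frequency in `[-N - L, -N]` and one in `[N, N + L]`; the paper takes `L = 2`. -/
def interactionSet (N L ξ : ℝ) : Set ℝ :=
  {ξ₁ | ξ₁ ∈ Set.Icc (-N - L) (-N) ∧ ξ - ξ₁ ∈ Set.Icc N (N + L)}

namespace interactionSet

variable {N L ξ ξ₁ p : ℝ}

lemma eq_Icc (N L ξ : ℝ) :
    interactionSet N L ξ = Set.Icc (max 0 ξ - (N + L)) (min 0 ξ - N) := by
  change Set.Icc (-N - L) (-N) ∩ (fun x ↦ ξ - x) ⁻¹' Set.Icc N (N + L) = _
  rw [Set.preimage_const_sub_Icc, Set.Icc_inter_Icc, ← max_sub_sub_right, ← min_sub_sub_right,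
    zero_sub, zero_sub, neg_add']

lemma volume_eq (N L ξ : ℝ) : volume (interactionSet N L ξ) = ENNReal.ofReal (L - |ξ|) := by
  have length_eq : min 0 ξ - N - (max 0 ξ - (N + L)) = L - |ξ| := by
    have max_sub_min : max 0 ξ - min 0 ξ = |ξ| := by simp [max_sub_min_eq_abs]
    linarith
  rw [eq_Icc, Real.volume_Icc, length_eq]

lemma nonpos (hN : 0 ≤ N) (h : ξ₁ ∈ interactionSet N L ξ) : ξ₁ ≤ 0 :=
  h.1.2.trans (neg_nonpos.2 hN)

lemma sub_nonneg (hN : 0 ≤ N) (h : ξ₁ ∈ interactionSet N L ξ) : 0 ≤ ξ - ξ₁ :=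
  hN.trans h.2.1

lemma abs_mem_Icc (hN : 0 ≤ N) (h : ξ₁ ∈ interactionSet N L ξ) : |ξ₁| ∈ Set.Icc N (N + L) := by
  rw [abs_of_nonpos (nonpos hN h)]
  constructor <;> linarith [h.1.1, h.1.2]

lemma abs_sub_mem_Icc (hN : 0 ≤ N) (h : ξ₁ ∈ interactionSet N L ξ) :
    |ξ - ξ₁| ∈ Set.Icc N (N + L) := by
  rw [abs_of_nonneg (sub_nonneg hN h)]
  exact h.2

lemma abs_resonance_mem_Icc (hN : 0 ≤ N) (h : ξ₁ ∈ interactionSet N L ξ) :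
    |3 * ξ * ξ₁ * (ξ - ξ₁)| ∈ Set.Icc (3 * N ^ 2 * |ξ|) (3 * (N + L) ^ 2 * |ξ|) := by
  obtain ⟨le_abs, abs_le⟩ := abs_mem_Icc hN h
  obtain ⟨le_abs_sub, abs_sub_le⟩ := abs_sub_mem_Icc hN h
  have abs_eq : |3 * ξ * ξ₁ * (ξ - ξ₁)| = 3 * (|ξ₁| * |ξ - ξ₁|) * |ξ| := by
    rw [abs_mul, abs_mul, abs_mul, abs_of_pos three_pos]
    ring
  rw [abs_eq, sq, sq]
  constructor <;> gcongr
  exact hN.trans (le_abs.trans abs_le)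

lemma rpow_add_rpow_sub_rpow_mem_Icc (hN : 0 ≤ N) (hp : 0 ≤ p)
    (h : ξ₁ ∈ interactionSet N L ξ) :
    |ξ₁| ^ p + |ξ - ξ₁| ^ p - |ξ| ^ p ∈ Set.Icc (N ^ p) (2 * (N + L) ^ p) := by
  obtain ⟨le_abs, abs_le⟩ := abs_mem_Icc hN h
  obtain ⟨le_abs_sub, abs_sub_le⟩ := abs_sub_mem_Icc hN h
  constructor
  · calc N ^ p ≤ min (|ξ₁| ^ p) (|ξ - ξ₁| ^ p) :=
          le_min (rpow_le_rpow hN le_abs hp) (rpow_le_rpow hN le_abs_sub hp)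
      _ ≤ |ξ₁| ^ p + |ξ - ξ₁| ^ p - |ξ₁ + (ξ - ξ₁)| ^ p :=
          min_rpow_le_rpow_add_rpow_sub_abs_add_rpow (nonpos hN h) (sub_nonneg hN h) hp
      _ = |ξ₁| ^ p + |ξ - ξ₁| ^ p - |ξ| ^ p := by rw [add_sub_cancel]
  · calc |ξ₁| ^ p + |ξ - ξ₁| ^ p - |ξ| ^ p ≤ |ξ₁| ^ p + |ξ - ξ₁| ^ p :=
          sub_le_self _ (by positivity)
      _ ≤ (N + L) ^ p + (N + L) ^ p := by gcongr
      _ = 2 * (N + L) ^ p := (two_mul _).symm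

end interactionSet

theorem stmt_10_general (N L ξ : ℝ) (hN : 0 ≤ N) :
    volume (interactionSet N L ξ) = ENNReal.ofReal (L - |ξ|) ∧
    (∀ ξ₁ ∈ interactionSet N L ξ,
      3 * N ^ 2 * |ξ| ≤ |3 * ξ * ξ₁ * (ξ - ξ₁)| ∧
      |3 * ξ * ξ₁ * (ξ - ξ₁)| ≤ 3 * (N + L) ^ 2 * |ξ|) ∧
    (∀ p : ℝ, 0 ≤ p → ∀ ξ₁ ∈ interactionSet N L ξ,
      N ^ p ≤ |ξ₁| ^ p + |ξ - ξ₁| ^ p - |ξ| ^ p ∧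
      |ξ₁| ^ p + |ξ - ξ₁| ^ p - |ξ| ^ p ≤ 2 * (N + L) ^ p) :=
  ⟨interactionSet.volume_eq N L ξ,
    fun _ h ↦ interactionSet.abs_resonance_mem_Icc hN h,
    fun _ hp _ h ↦ interactionSet.rpow_add_rpow_sub_rpow_mem_Icc hN hp h⟩

theorem stmt_10 (N ξ : ℝ) (hN : 1 ≤ N) (hξ : |ξ| ≤ 1 / 2) :
    (volume {ξ₁ : ℝ | ξ₁ ∈ Set.Icc (-N - 2) (-N) ∧ ξ - ξ₁ ∈ Set.Icc N (N + 2)} =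
        ENNReal.ofReal (2 - |ξ|) ∧ (3 : ℝ) / 2 ≤ 2 - |ξ|) ∧
    (∀ ξ₁ ∈ {ξ₁ : ℝ | ξ₁ ∈ Set.Icc (-N - 2) (-N) ∧ ξ - ξ₁ ∈ Set.Icc N (N + 2)},
      3 * N ^ 2 * |ξ| ≤ |3 * ξ * ξ₁ * (ξ - ξ₁)| ∧
      |3 * ξ * ξ₁ * (ξ - ξ₁)| ≤ 3 * (N + 2) ^ 2 * |ξ|) ∧
    (∀ p : ℝ, 0 < p →
      ∀ ξ₁ ∈ {ξ₁ : ℝ | ξ₁ ∈ Set.Icc (-N - 2) (-N) ∧ ξ - ξ₁ ∈ Set.Icc N (N + 2)},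
        N ^ p ≤ |ξ₁| ^ p + |ξ - ξ₁| ^ p - |ξ| ^ p ∧
        |ξ₁| ^ p + |ξ - ξ₁| ^ p - |ξ| ^ p ≤ 2 * (N + 2) ^ p) := by
  obtain ⟨volume_eq, resonance, dissipation⟩ := stmt_10_general N 2 ξ (zero_le_one.trans hN)
  exact ⟨⟨volume_eq, by linarith⟩, resonance, fun p hp ↦ dissipation p hp.le⟩
end

section
/- Let p > 0, t > 0 and γ ∈ (0, 1/2]. For N ≥ 1 and ξ ∈ ℝ set K_{N,ξ} = {ξ₁ ∈ ℝ : (ξ₁ ∈ [−N−2,−N] and ξ−ξ₁ ∈ [N,N+2]) or (ξ₁ ∈ [N,N+2] and ξ−ξ₁ ∈ [−N−2,−N])}, and for ξ ≠ 0 and ξ₁ ∈ K_{N,ξ} set φ(ξ,ξ₁) = (|ξ|^p − |ξ₁|^p − |ξ−ξ₁|^p) + i(−ξ³ + ξ₁³ + (ξ−ξ₁)³) ∈ ℂ, which is nonzero there. Then there exist c > 0 and N₀ ≥ 1 (depending on p, t, γ) such that for every N ≥ N₀ and every ξ with γ/2 ≤ |ξ| ≤ γ: | ∫_{K_{N,ξ}}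 (e^{t·φ(ξ,ξ₁)} − 1)/φ(ξ,ξ₁) dξ₁ | ≥ c · N^p / (N^{2p} + γ² N⁴). -/
open MeasureTheory Real

/-- The resonance set `K_{N,ξ}` from the ill-posedness argument. -/
def resonanceSet (N ξ : ℝ) : Set ℝ :=
  {ξ₁ : ℝ | (ξ₁ ∈ Set.Icc (-N - 2) (-N) ∧ ξ - ξ₁ ∈ Set.Icc N (N + 2)) ∨
            (ξ₁ ∈ Set.Icc N (N + 2) ∧ ξ - ξ₁ ∈ Set.Icc (-N - 2) (-N))}

/-- The phase function `φ(ξ, ξ₁)` from the ill-posedness argument. -/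
noncomputable def phase (p ξ ξ₁ : ℝ) : ℂ :=
  ((|ξ| ^ p - |ξ₁| ^ p - |ξ - ξ₁| ^ p : ℝ) : ℂ) +
    Complex.I * ((-ξ ^ 3 + ξ₁ ^ 3 + (ξ - ξ₁) ^ 3 : ℝ) : ℂ)

/-!
Since `Re ((e^{tz} - 1) / z) = (-Re z + Re (e^{tz} * conj z)) / |z|²`, this real part is at least
`-Re z / (2|z|²)` once the exponential term is absorbed by half of `-Re z`. On the resonance set
`-Re φ` is comparable to `N^p` and `|Im φ|` is at most a multiple of `|ξ| N²`, so the absorption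
amounts to `N² e^{-t N^p}` being small. The real part of the integrand is then bounded below by a
multiple of `N^p / (N^{2p} + ξ² N⁴)`, so there is no cancellation, and the resonance set has measure
at least `2 - |ξ|`.
-/

open Filter Topology

theorem tendsto_rpow_mul_exp_neg_mul_rpow_atTop_nhds_zero (s : ℝ) {t p : ℝ} (ht : 0 < t)
    (hp : 0 < p) : Tendsto (fun N : ℝ => N ^ s * exp (-t * N ^ p)) atTop (𝓝 0) := by
  refine ((tendsto_rpow_mul_exp_neg_mul_atTop_nhds_zero (s / p) t ht).comp
    (tendsto_rpow_atTop hp)).congr' ?_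
  filter_upwards [eventually_ge_atTop 0] with N hN
  simp only [Function.comp_apply, ← rpow_mul hN, mul_div_cancel₀ s hp.ne']

theorem mul_measureReal_le_norm_setIntegral {α 𝕜 : Type*} [MeasurableSpace α] [RCLike 𝕜]
    {μ : Measure α} {s : Set α} {f : α → 𝕜} {m : ℝ} (hs : MeasurableSet s) (hμs : μ s ≠ ⊤)
    (hf : IntegrableOn f s μ) (hm : ∀ x ∈ s, m ≤ RCLike.re (f x)) :
    m * μ.real s ≤ ‖∫ x in s, f x ∂μ‖ :=
  calc m * μ.real s ≤ ∫ x in s, RCLike.re (f x) ∂μ :=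
        setIntegral_ge_of_const_le_real hs hμs hm hf.re
    _ = RCLike.re (∫ x in s, f x ∂μ) := integral_re hf
    _ ≤ ‖∫ x in s, f x ∂μ‖ := RCLike.re_le_norm _

theorem neg_re_sub_div_le_re_exp_sub_one_div (z : ℂ) (t : ℝ) :
    (-z.re - ‖z‖ * exp (t * z.re)) / ‖z‖ ^ 2 ≤ ((Complex.exp (t * z) - 1) / z).re := by
  have h_exp : -(‖z‖ * exp (t * z.re)) ≤ (Complex.exp (t * z) * star z).re := by
    have h_norm : ‖Complex.exp (t * z) * star z‖ = ‖z‖ * exp (t * z.re) := by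
      rw [norm_mul, norm_star, Complex.norm_exp, Complex.re_ofReal_mul, mul_comm]
    rw [← h_norm]
    exact (abs_le.1 (Complex.abs_re_le_norm _)).1
  have h_div : ((Complex.exp (t * z) - 1) / z).re =
      (-z.re + (Complex.exp (t * z) * star z).re) / ‖z‖ ^ 2 := by
    rw [Complex.div_re, ← add_div, Complex.normSq_eq_norm_sq]
    simp only [Complex.sub_re, Complex.sub_im, Complex.one_re, Complex.one_im, Complex.mul_re,
      Complex.star_def, Complex.conj_re, Complex.conj_im]
    ring
  rw [h_div, sub_eq_add_neg]
  gcongr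

theorem neg_re_div_le_re_exp_sub_one_div {z : ℂ} {t : ℝ}
    (h : ‖z‖ * exp (t * z.re) ≤ -z.re / 2) :
    -z.re / (2 * ‖z‖ ^ 2) ≤ ((Complex.exp (t * z) - 1) / z).re := by
  refine le_trans ?_ (neg_re_sub_div_le_re_exp_sub_one_div z t)
  rw [← div_div]
  gcongr
  linarith

section ResonanceSet

theorem resonanceSet_eq_union_Icc (N ξ : ℝ) :
    resonanceSet N ξ =
      Set.Icc (max (-N - 2) (ξ - (N + 2))) (min (-N) (ξ - N)) ∪
        Set.Icc (max N (ξ - -N)) (min (N + 2) (ξ - (-N - 2))) := by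
  ext x
  simp only [resonanceSet, Set.mem_ofPred_eq, Set.sub_mem_Icc_iff_right, ← Set.mem_inter_iff,
    Set.Icc_inter_Icc, Set.mem_union]

theorem isCompact_resonanceSet (N ξ : ℝ) : IsCompact (resonanceSet N ξ) := by
  rw [resonanceSet_eq_union_Icc]
  exact isCompact_Icc.union isCompact_Icc

theorem two_sub_abs_le_volume_resonanceSet (N ξ : ℝ) :
    2 - |ξ| ≤ volume.real (resonanceSet N ξ) := by
  calc 2 - |ξ| = min (N + 2) (ξ - (-N - 2)) - max N (ξ - -N) := by
        rcases le_total 0 ξ with h | h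
        · rw [abs_of_nonneg h, min_eq_left (by linarith), max_eq_right (by linarith)]; ring
        · rw [abs_of_nonpos h, min_eq_right (by linarith), max_eq_left (by linarith)]; ring
    _ ≤ volume.real (Set.Icc (max N (ξ - -N)) (min (N + 2) (ξ - (-N - 2)))) := by
        rw [volume_real_Icc]
        exact le_max_left _ _
    _ ≤ volume.real (resonanceSet N ξ) := by
        refine measureReal_mono ?_ (isCompact_resonanceSet N ξ).measure_lt_top.ne
        rw [resonanceSet_eq_union_Icc]
        exact Set.subset_union_right

variable {N ξ x : ℝ}

theorem abs_le_two_of_mem_resonanceSet (hx : x ∈ resonanceSet N ξ) : |ξ| ≤ 2 := by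
  rw [abs_le]
  rcases hx with ⟨⟨_, _⟩, _, _⟩ | ⟨⟨_, _⟩, _, _⟩ <;> constructor <;> linarith

theorem abs_mem_Icc_of_mem_resonanceSet (hN : 0 ≤ N) (hx : x ∈ resonanceSet N ξ) :
    |x| ∈ Set.Icc N (N + 2) ∧ |ξ - x| ∈ Set.Icc N (N + 2) := by
  rcases hx with ⟨⟨hx₁, hx₂⟩, hy⟩ | ⟨hx, hy₁, hy₂⟩
  · rw [abs_of_nonpos (by linarith : x ≤ 0), abs_of_nonneg (hN.trans hy.1)]
    exact ⟨⟨by linarith, by linarith⟩, hy⟩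
  · rw [abs_of_nonneg (hN.trans hx.1), abs_of_nonpos (by linarith : ξ - x ≤ 0)]
    exact ⟨hx, by linarith, by linarith⟩

end ResonanceSet

section Phase

theorem phase_re (p ξ x : ℝ) : (phase p ξ x).re = |ξ| ^ p - |x| ^ p - |ξ - x| ^ p := by
  simp only [phase, Complex.add_re, Complex.ofReal_re, Complex.I_mul_re, Complex.ofReal_im,
    neg_zero, add_zero]

theorem phase_im (p ξ x : ℝ) : (phase p ξ x).im = -3 * ξ * x * (ξ - x) := by
  simp only [phase, Complex.add_im, Complex.ofReal_im, Complex.I_mul_im, Complex.ofReal_re]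
  ring

theorem continuous_phase {p : ℝ} (hp : 0 ≤ p) (ξ : ℝ) : Continuous (phase p ξ) := by
  unfold phase
  fun_prop (disch := exact fun _ => Or.inr hp)

variable {p t N ξ x : ℝ}

theorem phase_re_mem_Icc (hp : 0 ≤ p) (hN : 2 ≤ N) (hx : x ∈ resonanceSet N ξ) :
    (phase p ξ x).re ∈ Set.Icc (-(2 * (2 * N) ^ p)) (-N ^ p) := by
  obtain ⟨⟨hx₁, hx₂⟩, hy₁, hy₂⟩ := abs_mem_Icc_of_mem_resonanceSet (by linarith) hx
  have hξ : |ξ| ^ p ≤ N ^ p := by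
    gcongr
    exact (abs_le_two_of_mem_resonanceSet hx).trans hN
  have hξ₀ : 0 ≤ |ξ| ^ p := by positivity
  have hx_lower : N ^ p ≤ |x| ^ p := by gcongr
  have hy_lower : N ^ p ≤ |ξ - x| ^ p := by gcongr
  have hx_upper : |x| ^ p ≤ (2 * N) ^ p := by gcongr; linarith
  have hy_upper : |ξ - x| ^ p ≤ (2 * N) ^ p := by gcongr; linarith
  rw [phase_re]
  constructor <;> linarith

theorem phase_ne_zero (hp : 0 ≤ p) (hN : 2 ≤ N) (hx : x ∈ resonanceSet N ξ) :
    phase p ξ x ≠ 0 := by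
  have hre : (phase p ξ x).re < 0 :=
    (phase_re_mem_Icc hp hN hx).2.trans_lt (neg_lt_zero.2 (rpow_pos_of_pos (by linarith) p))
  exact fun h => hre.ne (by rw [h, Complex.zero_re])

theorem abs_phase_im_le (hN : 2 ≤ N) (hx : x ∈ resonanceSet N ξ) :
    |(phase p ξ x).im| ≤ 12 * |ξ| * N ^ 2 := by
  obtain ⟨⟨_, hx_upper⟩, _, hy_upper⟩ := abs_mem_Icc_of_mem_resonanceSet (by linarith) hx
  calc |(phase p ξ x).im| = 3 * |ξ| * |x| * |ξ - x| := by
        rw [phase_im, abs_mul, abs_mul, abs_mul, abs_neg, abs_of_pos three_pos]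
    _ ≤ 3 * |ξ| * (2 * N) * (2 * N) := by gcongr <;> linarith
    _ = 12 * |ξ| * N ^ 2 := by ring

theorem sq_norm_phase_le (hp : 0 ≤ p) (hN : 2 ≤ N) (hx : x ∈ resonanceSet N ξ) :
    ‖phase p ξ x‖ ^ 2 ≤ (4 * 2 ^ (2 * p) + 144) * (N ^ (2 * p) + ξ ^ 2 * N ^ 4) := by
  obtain ⟨hre_lower, hre_upper⟩ := phase_re_mem_Icc hp hN hx
  have hN₀ : 0 ≤ N := by linarith
  have hre : (phase p ξ x).re ^ 2 ≤ 4 * 2 ^ (2 * p) * N ^ (2 * p) :=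
    calc (phase p ξ x).re ^ 2 ≤ (2 * (2 * N) ^ p) ^ 2 := by
          refine sq_le_sq' hre_lower (hre_upper.trans ?_)
          have : 0 ≤ N ^ p := by positivity
          have : 0 ≤ (2 * N) ^ p := by positivity
          linarith
      _ = 4 * (2 * N) ^ (p * (2 : ℕ)) := by rw [rpow_mul_natCast (by positivity)]; ring
      _ = 4 * 2 ^ (2 * p) * N ^ (2 * p) := by
          rw [Nat.cast_ofNat, mul_comm p, mul_rpow zero_le_two hN₀, mul_assoc]
  have him : (phase p ξ x).im ^ 2 ≤ 144 * (ξ ^ 2 * N ^ 4) :=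
    calc (phase p ξ x).im ^ 2 ≤ (12 * |ξ| * N ^ 2) ^ 2 :=
          sq_le_sq.2 ((abs_phase_im_le hN hx).trans (le_abs_self _))
      _ = 144 * (ξ ^ 2 * N ^ 4) := by rw [mul_pow, mul_pow, sq_abs]; ring
  calc ‖phase p ξ x‖ ^ 2 = (phase p ξ x).re ^ 2 + (phase p ξ x).im ^ 2 := by
        rw [Complex.sq_norm, Complex.normSq_apply]; ring
    _ ≤ 4 * 2 ^ (2 * p) * N ^ (2 * p) + 144 * (ξ ^ 2 * N ^ 4) := add_le_add hre him
    _ ≤ (4 * 2 ^ (2 * p) + 144) * (N ^ (2 * p) + ξ ^ 2 * N ^ 4) := by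
        have h₁ : 0 ≤ 2 ^ (2 * p) * (ξ ^ 2 * N ^ 4) := by positivity
        have h₂ : 0 ≤ N ^ (2 * p) := by positivity
        linarith

theorem norm_phase_mul_exp_le (hp : 0 ≤ p) (ht : 0 ≤ t) (hN : 2 ≤ N)
    (hexp : N ^ 2 * exp (-t * N ^ p) ≤ 1 / 96) (hx : x ∈ resonanceSet N ξ) :
    ‖phase p ξ x‖ * exp (t * (phase p ξ x).re) ≤ -(phase p ξ x).re / 2 := by
  have hre := (phase_re_mem_Icc hp hN hx).2
  have him : |(phase p ξ x).im| ≤ 24 * N ^ 2 :=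
    calc |(phase p ξ x).im| ≤ 12 * |ξ| * N ^ 2 := abs_phase_im_le hN hx
      _ ≤ 12 * 2 * N ^ 2 := by gcongr; exact abs_le_two_of_mem_resonanceSet hx
      _ = 24 * N ^ 2 := by ring
  have hNp : 1 ≤ N ^ p := one_le_rpow (by linarith) hp
  set a := (phase p ξ x).re
  have hexp_a : exp (t * a) ≤ exp (-t * N ^ p) := by
    rw [exp_le_exp, neg_mul, ← mul_neg]
    gcongr
  have hexp_sq : N ^ 2 * exp (t * a) ≤ 1 / 96 := le_trans (by gcongr) hexp
  have hexp_quarter : exp (t * a) ≤ 1 / 4 := by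
    have : 1 ≤ N ^ 2 := one_le_pow₀ (by linarith)
    nlinarith [exp_pos (t * a)]
  calc ‖phase p ξ x‖ * exp (t * a) ≤ (|a| + |(phase p ξ x).im|) * exp (t * a) := by
        gcongr; exact Complex.norm_le_abs_re_add_abs_im _
    _ ≤ (-a + 24 * N ^ 2) * exp (t * a) := by
        rw [abs_of_nonpos (by linarith : a ≤ 0)]
        gcongr
    _ = -a * exp (t * a) + 24 * (N ^ 2 * exp (t * a)) := by ring
    _ ≤ -a * (1 / 4) + 24 * (1 / 96) := by
        gcongr
        linarith
    _ ≤ -a / 2 := by linarith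

theorem rpow_div_le_re_exp_sub_one_div_phase (hp : 0 ≤ p) (ht : 0 ≤ t) (hN : 2 ≤ N)
    (hexp : N ^ 2 * exp (-t * N ^ p) ≤ 1 / 96) (hx : x ∈ resonanceSet N ξ) :
    N ^ p / (2 * ((4 * 2 ^ (2 * p) + 144) * (N ^ (2 * p) + ξ ^ 2 * N ^ 4))) ≤
      ((Complex.exp (t * phase p ξ x) - 1) / phase p ξ x).re := by
  have hre := (phase_re_mem_Icc hp hN hx).2
  have hNp : 0 < N ^ p := rpow_pos_of_pos (by linarith) p
  have hphase : phase p ξ x ≠ 0 := phase_ne_zero hp hN hx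
  calc N ^ p / (2 * ((4 * 2 ^ (2 * p) + 144) * (N ^ (2 * p) + ξ ^ 2 * N ^ 4)))
      ≤ -(phase p ξ x).re / (2 * ‖phase p ξ x‖ ^ 2) := by
        gcongr
        · linarith
        · linarith
        · exact sq_norm_phase_le hp hN hx
    _ ≤ _ := neg_re_div_le_re_exp_sub_one_div (norm_phase_mul_exp_le hp ht hN hexp hx)

theorem integrableOn_exp_sub_one_div_phase (hp : 0 ≤ p) (hN : 2 ≤ N) :
    IntegrableOn (fun x => (Complex.exp (t * phase p ξ x) - 1) / phase p ξ x)
      (resonanceSet N ξ) := by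
  have hcont := continuous_phase hp ξ
  exact ContinuousOn.integrableOn_compact (isCompact_resonanceSet N ξ) <|
    ContinuousOn.div (by fun_prop) hcont.continuousOn fun _ => phase_ne_zero hp hN

end Phase

theorem stmt_12_general {p : ℝ} (hp : 0 < p) :
    ∃ c : ℝ, 0 < c ∧ ∀ t : ℝ, 0 < t → ∀ᶠ N : ℝ in atTop, ∀ ξ : ℝ,
      c * (2 - |ξ|) * N ^ p / (N ^ (2 * p) + ξ ^ 2 * N ^ 4) ≤
        ‖∫ ξ₁ in resonanceSet N ξ,
            (Complex.exp (t * phase p ξ ξ₁) - 1) / phase p ξ ξ₁‖ := by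
  refine ⟨1 / (2 * (4 * 2 ^ (2 * p) + 144)), by positivity, fun t ht => ?_⟩
  have hsmall := (tendsto_rpow_mul_exp_neg_mul_rpow_atTop_nhds_zero 2 ht hp).eventually_le_const
    (by norm_num : (0 : ℝ) < 1 / 96)
  filter_upwards [hsmall, eventually_ge_atTop 2] with N hexp hN ξ
  rw [rpow_two] at hexp
  have hK := isCompact_resonanceSet N ξ
  set m := N ^ p / (2 * ((4 * 2 ^ (2 * p) + 144) * (N ^ (2 * p) + ξ ^ 2 * N ^ 4))) with hm
  have : 0 ≤ m := by positivity
  calc _ = m * (2 - |ξ|) := by rw [hm]; field_simp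
    _ ≤ m * volume.real (resonanceSet N ξ) := by
        gcongr
        exact two_sub_abs_le_volume_resonanceSet N ξ
    _ ≤ _ := mul_measureReal_le_norm_setIntegral hK.measurableSet hK.measure_lt_top.ne
        (integrableOn_exp_sub_one_div_phase hp.le hN)
        fun _ => rpow_div_le_re_exp_sub_one_div_phase hp.le ht.le hN hexp

theorem stmt_12 (p t γ : ℝ) (hp : 0 < p) (ht : 0 < t)
    (hγ0 : 0 < γ) (hγ : γ ≤ 1 / 2) :
    ∃ c : ℝ, 0 < c ∧ ∃ N₀ : ℝ, 1 ≤ N₀ ∧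
      ∀ N : ℝ, N₀ ≤ N → ∀ ξ : ℝ, γ / 2 ≤ |ξ| → |ξ| ≤ γ →
        c * N ^ p / (N ^ (2 * p) + γ ^ 2 * N ^ 4) ≤
          ‖∫ ξ₁ in resonanceSet N ξ,
              (Complex.exp (t * phase p ξ ξ₁) - 1) / phase p ξ ξ₁‖ := by
  obtain ⟨c, hc, h⟩ := stmt_12_general hp
  obtain ⟨N₀, hN₀⟩ := ((h t ht).and (eventually_ge_atTop 1)).exists_forall_of_atTop
  refine ⟨c, hc, N₀, (hN₀ N₀ le_rfl).2, fun N hN ξ _ hξ => le_trans ?_ ((hN₀ N hN).1 ξ)⟩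
  have hN_pos : 0 < N := one_pos.trans_le (hN₀ N hN).2
  have hc_le : c ≤ c * (2 - |ξ|) := le_mul_of_one_le_right hc.le (by linarith)
  have hξ_sq : ξ ^ 2 ≤ γ ^ 2 := sq_le_sq.2 (hξ.trans (le_abs_self γ))
  gcongr
  exact mul_nonneg (hc.le.trans hc_le) (by positivity)
end

section
/- Let η : ℝ → ℂ be a smooth (C^∞) function with support contained in [−2, 2], and let φ : ℝ → ℝ be a smooth (C^∞) function with 0 ≤ φ ≤ 1 and support contained in {τ : 1/2 ≤ |τ| ≤ 2}. Then there exists a constant C > 0 (depending only on η and φ) such that for every a ≥ 0: Σ_{j ∈ ℤ} (1 + 2^j + a)^{1/2} · ‖g_j^a‖_{L²(ℝ)} ≤ C, where g_j^a(t) = ∫_ℝ e^{2πitτ} φ(2^{−j} τ) ( ∫_ℝ e^{−2πisτ} e^{−a|s|} η(s) ds ) dτ. -/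
open MeasureTheory Real

/-!
Split at `s = 0`, the Fourier transform of `e^{-a|s|} η(s)` is the sum of the Laplace transforms of
`η` at `c = a + 2πiτ` and of its reflection at the conjugate of `c`. Two integrations by parts
expand them as `η(0) / c` and `η(0) / conj c` up to `O(|c|⁻²)`; the leading terms add up to the
Poisson kernel `2a η(0) / |c|²`, so with `A = 1 + a` the Fourier transform is `O(A / (A² + τ²))`
uniformly in `a`. By Plancherel the `j`-th weighted term is then `O(min w w⁻¹)` with `w` a multiple
of `√(2ʲ / A)`, and a two-sided geometric sum of this kind is bounded independently of `A`.
-/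

open Set Function
open scoped FourierTransform ContDiff ComplexConjugate

section Plancherel

variable {V H : Type*} [NormedAddCommGroup V] [InnerProductSpace ℝ V] [FiniteDimensional ℝ V]
  [MeasurableSpace V] [BorelSpace V] [NormedAddCommGroup H] {f : V → H}

lemma continuous_fourier_of_integrable [NormedSpace ℂ H] (hf : Integrable f) :
    Continuous (𝓕 f) :=
  VectorFourier.fourierIntegral_continuous continuous_fourierChar continuous_inner hf

lemma integral_schwartz_smul_fourier_eq [NormedSpace ℂ H] [CompleteSpace H] (hf : Integrable f)
    (g : SchwartzMap V ℂ) : ∫ x, g x • 𝓕 f x = ∫ x, 𝓕 g x • f x := by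
  simpa using! (VectorFourier.integral_fourierIntegral_smul_eq_flip (L := innerₗ V)
    continuous_fourierChar continuous_inner g.integrable hf).symm

variable [InnerProductSpace ℂ H]

lemma L2_norm_sq_eq_integral {α : Type*} [MeasurableSpace α] {μ : Measure α} (g : Lp H 2 μ) :
    ‖g‖ ^ 2 = ∫ x, ‖g x‖ ^ 2 ∂μ := by
  have h := L2.inner_def (𝕜 := ℂ) g g
  simp only [inner_self_eq_norm_sq_to_K, ← RCLike.ofReal_pow, integral_ofReal] at h
  exact RCLike.ofReal_injective h

variable [CompleteSpace H]

-- The `L²` Fourier transform is an extension by density; it is identified with the Fourier integral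
-- by pairing both with test functions.
lemma fourier_toLp_ae_eq (hf : Integrable f) (hf₂ : MemLp f 2) :
    (𝓕 (hf₂.toLp f) : Lp H 2 (volume : Measure V)) =ᵐ[volume] 𝓕 f := by
  refine ae_eq_of_integral_contDiff_smul_eq ((Lp.memLp _).locallyIntegrable one_le_two)
    (continuous_fourier_of_integrable hf).locallyIntegrable fun g hg hgc => ?_
  let g' : SchwartzMap V ℂ := (hgc.comp_left Complex.ofReal_zero).toSchwartzMap
    (Complex.ofRealCLM.contDiff.comp hg)
  have hg' (x : V) (v : H) : g' x • v = g x • v := Complex.coe_smul (g x) v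
  have h_distrib : ∫ x, 𝓕 g' x • hf₂.toLp f x = ∫ x, g' x • 𝓕 (hf₂.toLp f) x := by
    simpa only [TemperedDistribution.fourier_apply, Lp.toTemperedDistribution_apply] using
      congrArg (· g') (Lp.fourier_toTemperedDistribution_eq (hf₂.toLp f))
  calc ∫ x, g x • 𝓕 (hf₂.toLp f) x
      = ∫ x, 𝓕 g' x • hf₂.toLp f x := by simp only [h_distrib, hg']
    _ = ∫ x, 𝓕 g' x • f x :=
        integral_congr_ae (hf₂.coeFn_toLp.mono fun x hx => congrArg (𝓕 g' x • ·) hx)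
    _ = ∫ x, g x • 𝓕 f x := by simp only [← integral_schwartz_smul_fourier_eq hf, hg']

lemma integral_norm_sq_fourier_eq (hf : Integrable f) (hf₂ : MemLp f 2) :
    ∫ ξ, ‖𝓕 f ξ‖ ^ 2 = ∫ x, ‖f x‖ ^ 2 := by
  calc ∫ ξ, ‖𝓕 f ξ‖ ^ 2
      = ∫ ξ, ‖(𝓕 (hf₂.toLp f) : Lp H 2 (volume : Measure V)) ξ‖ ^ 2 :=
        integral_congr_ae ((fourier_toLp_ae_eq hf hf₂).mono fun ξ hξ => by simp only [hξ])
    _ = ∫ x, ‖hf₂.toLp f x‖ ^ 2 := by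
        rw [← L2_norm_sq_eq_integral, Lp.norm_fourier_eq, L2_norm_sq_eq_integral]
    _ = ∫ x, ‖f x‖ ^ 2 := integral_congr_ae (hf₂.coeFn_toLp.mono fun x hx => by simp only [hx])

lemma integral_norm_sq_fourierInv_eq (hf : Integrable f) (hf₂ : MemLp f 2) :
    ∫ x, ‖𝓕⁻ f x‖ ^ 2 = ∫ ξ, ‖f ξ‖ ^ 2 := by
  simp_rw [fourierInv_eq_fourier_neg]
  rw [integral_neg_eq_self fun ξ => ‖𝓕 f ξ‖ ^ 2, integral_norm_sq_fourier_eq hf hf₂]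

end Plancherel

section Laplace

variable {E : Type*} [NormedAddCommGroup E] [NormedSpace ℂ E] {f : ℝ → E} {c : ℂ}

/-- The one-sided Laplace transform `∫₀^∞ e^{-cs} f(s) ds`, with junk value `0` when the integrand
is not integrable. It represents each half of the Fourier transform of a damped function. -/
noncomputable def laplaceTransform (f : ℝ → E) (c : ℂ) : E :=
  ∫ s in Ioi (0 : ℝ), Complex.exp (-(c * s)) • f s

lemma norm_laplaceTransform_le (hf : IntegrableOn f (Ioi 0)) (hc : 0 ≤ c.re) :
    ‖laplaceTransform f c‖ ≤ ∫ s in Ioi (0 : ℝ), ‖f s‖ := by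
  refine norm_integral_le_of_norm_le hf.norm
    ((ae_restrict_mem measurableSet_Ioi).mono fun s hs => ?_)
  have hexp : ‖Complex.exp (-(c * s))‖ ≤ 1 := by
    simpa [Complex.norm_exp] using mul_nonneg hc (le_of_lt hs)
  simpa only [norm_smul, one_mul] using mul_le_mul_of_nonneg_right hexp (norm_nonneg (f s))

variable [CompleteSpace E]

lemma smul_laplaceTransform (hf : ContDiff ℝ 1 f) (hfc : HasCompactSupport f) (c : ℂ) :
    c • laplaceTransform f c = f 0 + laplaceTransform (deriv f) c := by
  have hexp : ContDiff ℝ 1 fun s : ℝ => Complex.exp (-(c * s)) :=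
    (contDiff_const.mul Complex.ofRealCLM.contDiff).neg.cexp
  have hderiv (s : ℝ) : deriv (fun s : ℝ => Complex.exp (-(c * s)) • f s) s =
      Complex.exp (-(c * s)) • deriv f s - c • Complex.exp (-(c * s)) • f s := by
    have hlin : HasDerivAt (fun s : ℝ => -(c * (s : ℂ))) (-(c * 1)) s :=
      ((Complex.ofRealCLM.hasDerivAt (x := s)).const_mul c).neg
    refine (hlin.cexp.smul (hf.differentiable one_ne_zero s).hasDerivAt).deriv.trans ?_
    module
  have hint : IntegrableOn (fun s : ℝ => Complex.exp (-(c * s)) • f s) (Ioi 0) :=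
    ((hexp.smul hf).continuous.integrable_of_hasCompactSupport hfc.smul_left).integrableOn
  have hint' : IntegrableOn (fun s : ℝ => Complex.exp (-(c * s)) • deriv f s) (Ioi 0) :=
    ((hexp.continuous.smul (hf.continuous_deriv le_rfl)).integrable_of_hasCompactSupport
      hfc.deriv.smul_left).integrableOn
  have hftc := (hfc.smul_left (f := fun s : ℝ => Complex.exp (-(c * s)))).integral_Ioi_deriv_eq
    (hexp.smul hf) 0
  change ∫ s in Ioi (0 : ℝ), deriv (fun s : ℝ => Complex.exp (-(c * s)) • f s) s =
    -(Complex.exp (-(c * (0 : ℝ))) • f 0) at hftc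
  simp only [hderiv, Complex.ofReal_zero, mul_zero, neg_zero, Complex.exp_zero, one_smul] at hftc
  have hsub : laplaceTransform (deriv f) c - c • laplaceTransform f c = -f 0 := by
    rw [← hftc, laplaceTransform, laplaceTransform, ← integral_smul]
    exact (integral_sub hint' (hint.smul c)).symm
  rw [← sub_eq_iff_eq_add, ← neg_sub, hsub, neg_neg]

lemma sq_smul_laplaceTransform (hf : ContDiff ℝ 2 f) (hfc : HasCompactSupport f) (c : ℂ) :
    c ^ 2 • laplaceTransform f c
      = c • f 0 + (deriv f 0 + laplaceTransform (deriv (deriv f)) c) := by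
  rw [sq, mul_smul, smul_laplaceTransform (hf.of_le one_le_two) hfc, smul_add,
    smul_laplaceTransform hf.deriv' hfc.deriv]

lemma norm_sq_smul_laplaceTransform_sub_le (hf : ContDiff ℝ 2 f) (hfc : HasCompactSupport f)
    (hc : 0 ≤ c.re) :
    ‖c ^ 2 • laplaceTransform f c - c • f 0‖
      ≤ ‖deriv f 0‖ + ∫ s in Ioi (0 : ℝ), ‖deriv (deriv f) s‖ := by
  have hint : Integrable (deriv (deriv f)) :=
    (hf.deriv'.continuous_deriv le_rfl).integrable_of_hasCompactSupport hfc.deriv.deriv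
  rw [sq_smul_laplaceTransform hf hfc, add_sub_cancel_left]
  exact (norm_add_le _ _).trans
    (add_le_add_right (norm_laplaceTransform_le hint.integrableOn hc) _)

end Laplace

section Damping

variable {E : Type*} [NormedAddCommGroup E] [NormedSpace ℂ E] {f : ℝ → E} {a : ℝ}

/-- The damped function `s ↦ e^{-a|s|} f(s)`, the time profile of the dissipative semigroup cut off
by `f`; the weight is cast to `ℂ` so that `f` can take values in any complex normed space. -/
noncomputable def expDamping (a : ℝ) (f : ℝ → E) (s : ℝ) : E :=
  ((rexp (-(a * |s|)) : ℝ) : ℂ) • f s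

lemma norm_expDamping_le (f : ℝ → E) (ha : 0 ≤ a) (s : ℝ) : ‖expDamping a f s‖ ≤ ‖f s‖ := by
  have hexp : rexp (-(a * |s|)) ≤ 1 := exp_le_one_iff.2 (neg_nonpos.2 (by positivity))
  rw [expDamping, norm_smul, Complex.norm_real, norm_of_nonneg (exp_pos _).le]
  exact mul_le_of_le_one_left (norm_nonneg _) hexp

lemma integrable_expDamping (hf : Integrable f) (ha : 0 ≤ a) : Integrable (expDamping a f) := by
  have hcont : Continuous fun s : ℝ => ((rexp (-(a * |s|)) : ℝ) : ℂ) := by fun_prop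
  exact hf.mono (hcont.aestronglyMeasurable.smul hf.aestronglyMeasurable)
    (.of_forall (norm_expDamping_le f ha))

lemma fourier_expDamping (hf : Integrable f) (ha : 0 ≤ a) (τ : ℝ) :
    𝓕 (expDamping a f) τ = laplaceTransform f (a + (2 * π * τ : ℝ) * Complex.I)
      + laplaceTransform (fun s => f (-s)) (conj (a + (2 * π * τ : ℝ) * Complex.I)) := by
  set g : ℝ → E := fun s => Complex.exp (↑(-2 * π * s * τ) * Complex.I) • expDamping a f s with hg
  have hint : Integrable g := by
    have hcont : Continuous fun s : ℝ => Complex.exp (↑(-2 * π * s * τ) * Complex.I) := by fun_prop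
    refine (integrable_expDamping hf ha).bdd_smul 1 hcont.aestronglyMeasurable
      (.of_forall fun s => ?_)
    rw [Complex.norm_exp_ofReal_mul_I]
  have hpos : ∫ s in Ioi 0, g s = laplaceTransform f (a + (2 * π * τ : ℝ) * Complex.I) := by
    refine setIntegral_congr_fun measurableSet_Ioi fun s hs => ?_
    simp only [hg, expDamping, abs_of_pos (mem_Ioi.1 hs), smul_smul, Complex.ofReal_exp,
      ← Complex.exp_add]
    congr 2
    push_cast; ring
  have hneg : ∫ s in Iic 0, g s
      = laplaceTransform (fun s => f (-s)) (conj (a + (2 * π * τ : ℝ) * Complex.I)) := by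
    rw [← neg_zero, ← integral_comp_neg_Ioi]
    refine setIntegral_congr_fun measurableSet_Ioi fun s hs => ?_
    simp only [hg, expDamping, abs_neg, abs_of_pos (mem_Ioi.1 hs), smul_smul, Complex.ofReal_exp,
      ← Complex.exp_add]
    congr 2
    simp only [map_add, map_mul, Complex.conj_ofReal, Complex.conj_I]
    push_cast; ring
  rw [fourier_real_eq_integral_exp_smul,
    ← intervalIntegral.integral_Iic_add_Ioi hint.integrableOn hint.integrableOn, hpos,
    hneg, add_comm]

-- The first-order terms at `c` and `conj c` cancel up to `c + conj c = 2 * c.re`; estimating them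
-- separately would only give `2 * ‖c‖` in place of `2 * |c.re|`.
lemma norm_sq_mul_norm_add_le {c : ℂ} {u v w : E} {B₁ B₂ : ℝ}
    (hu : ‖c ^ 2 • u - c • w‖ ≤ B₁) (hv : ‖conj c ^ 2 • v - conj c • w‖ ≤ B₂) :
    ‖c‖ ^ 2 * ‖u + v‖ ≤ 2 * |c.re| * ‖w‖ + B₁ + B₂ := by
  rcases eq_or_ne c 0 with rfl | hc
  · simpa [add_assoc] using add_nonneg ((norm_nonneg _).trans hu) ((norm_nonneg _).trans hv)
  have hc' : conj c ≠ 0 := (map_ne_zero _).2 hc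
  have hnorm : ‖conj c / c‖ = 1 := by
    rw [norm_div, Complex.norm_conj, div_self (norm_ne_zero_iff.2 hc)]
  have hnorm' : ‖c / conj c‖ = 1 := by
    rw [norm_div, Complex.norm_conj, div_self (norm_ne_zero_iff.2 hc)]
  have hsplit : (c * conj c) • (u + v) = ((2 * c.re : ℝ) : ℂ) • w
      + (conj c / c) • (c ^ 2 • u - c • w) + (c / conj c) • (conj c ^ 2 • v - conj c • w) := by
    rw [← Complex.add_conj]
    match_scalars <;> (field_simp; try ring)
  calc ‖c‖ ^ 2 * ‖u + v‖ = ‖(c * conj c) • (u + v)‖ := by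
        rw [norm_smul, norm_mul, Complex.norm_conj, sq]
    _ ≤ ‖((2 * c.re : ℝ) : ℂ) • w‖ + ‖(conj c / c) • (c ^ 2 • u - c • w)‖
          + ‖(c / conj c) • (conj c ^ 2 • v - conj c • w)‖ := hsplit ▸ norm_add₃_le
    _ ≤ 2 * |c.re| * ‖w‖ + B₁ + B₂ := by
        simp only [norm_smul, hnorm, hnorm', one_mul, Complex.norm_real, norm_mul, norm_eq_abs,
          abs_two]
        gcongr

lemma norm_fourier_expDamping_le (hf : Integrable f) (ha : 0 ≤ a) (τ : ℝ) :
    ‖𝓕 (expDamping a f) τ‖ ≤ ∫ s, ‖f s‖ :=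
  (VectorFourier.norm_fourierIntegral_le_integral_norm _ _ _ _ _).trans
    (integral_mono (integrable_expDamping hf ha).norm hf.norm (norm_expDamping_le f ha))

variable [CompleteSpace E]

lemma exists_sq_mul_norm_fourier_expDamping_le (hf : ContDiff ℝ 2 f) (hfc : HasCompactSupport f) :
    ∃ B : ℝ, 0 ≤ B ∧ ∀ a : ℝ, 0 ≤ a → ∀ τ : ℝ,
      (a ^ 2 + (2 * π * τ) ^ 2) * ‖𝓕 (expDamping a f) τ‖ ≤ 2 * a * ‖f 0‖ + B := by
  set g : ℝ → E := fun s => f (-s) with hg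
  let B (h : ℝ → E) : ℝ := ‖deriv h 0‖ + ∫ s in Ioi (0 : ℝ), ‖deriv (deriv h) s‖
  refine ⟨B f + B g, by positivity, fun a ha τ => ?_⟩
  set c : ℂ := a + (2 * π * τ : ℝ) * Complex.I with hc
  have hre : c.re = a := by simp [hc]
  have hnorm : ‖c‖ ^ 2 = a ^ 2 + (2 * π * τ) ^ 2 := by
    rw [Complex.sq_norm, hc, Complex.normSq_add_mul_I]
  have hint : Integrable f := hf.continuous.integrable_of_hasCompactSupport hfc
  have hright : ‖c ^ 2 • laplaceTransform f c - c • f 0‖ ≤ B f :=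
    norm_sq_smul_laplaceTransform_sub_le hf hfc (hre ▸ ha)
  have hleft : ‖conj c ^ 2 • laplaceTransform g (conj c) - conj c • f 0‖ ≤ B g := by
    have h := norm_sq_smul_laplaceTransform_sub_le (c := conj c) (hf.comp contDiff_neg)
      (hfc.comp_homeomorph (Homeomorph.neg ℝ)) (by rwa [Complex.conj_re, hre])
    simpa [hg] using! h
  have h := norm_sq_mul_norm_add_le hright hleft
  rwa [hnorm, hre, abs_of_nonneg ha, add_assoc, ← fourier_expDamping hint ha] at h

lemma exists_norm_fourier_expDamping_le (hf : ContDiff ℝ 2 f) (hfc : HasCompactSupport f) :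
    ∃ K : ℝ, 0 < K ∧ ∀ a : ℝ, 0 ≤ a → ∀ τ : ℝ,
      ‖𝓕 (expDamping a f) τ‖ ≤ K * ((1 + a) / ((1 + a) ^ 2 + τ ^ 2)) := by
  obtain ⟨B, hB, hdecay⟩ := exists_sq_mul_norm_fourier_expDamping_le hf hfc
  have hN : 0 ≤ ∫ s, ‖f s‖ := by positivity
  refine ⟨1 + 2 * (∫ s, ‖f s‖) + 4 * ‖f 0‖ + 2 * B, by positivity, fun a ha τ => ?_⟩
  have hbdd := norm_fourier_expDamping_le (hf.continuous.integrable_of_hasCompactSupport hfc) ha τ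
  have hweight : (1 + a) ^ 2 + τ ^ 2 ≤ 2 + 2 * (a ^ 2 + (2 * π * τ) ^ 2) := by
    have hπ : 1 ≤ π ^ 2 := one_le_pow₀ (by linarith [pi_gt_three])
    nlinarith [sq_nonneg (1 - a), mul_le_mul_of_nonneg_right hπ (sq_nonneg τ), sq_nonneg τ]
  rw [mul_div_assoc', le_div_iff₀ (by positivity), mul_comm]
  calc ((1 + a) ^ 2 + τ ^ 2) * ‖𝓕 (expDamping a f) τ‖
      ≤ 2 * ‖𝓕 (expDamping a f) τ‖
          + 2 * ((a ^ 2 + (2 * π * τ) ^ 2) * ‖𝓕 (expDamping a f) τ‖) := by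
        linarith [mul_le_mul_of_nonneg_right hweight (norm_nonneg (𝓕 (expDamping a f) τ))]
    _ ≤ 2 * (∫ s, ‖f s‖) + 2 * (2 * a * ‖f 0‖ + B) := by
        gcongr
        exact hdecay a ha τ
    _ ≤ (1 + 2 * (∫ s, ‖f s‖) + 4 * ‖f 0‖ + 2 * B) * (1 + a) := by
        nlinarith [mul_nonneg hN ha, mul_nonneg hB ha, norm_nonneg (f 0)]

end Damping

section SupportedMultiplier

variable {α E : Type*} [MeasurableSpace α] {μ : Measure α} [NormedAddCommGroup E] {m : α → E}
  {s : Set α} {B : ℝ}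

lemma memLp_of_bounded_of_support_subset (hm : AEStronglyMeasurable m μ) (hs : MeasurableSet s)
    (hμs : μ s ≠ ⊤) (hms : support m ⊆ s) (hB : ∀ x ∈ s, ‖m x‖ ≤ B) (p : ENNReal) :
    MemLp m p μ := by
  refine (memLp_indicator_const p hs B (.inr hμs)).mono hm (.of_forall fun x => ?_)
  by_cases hx : x ∈ s
  · simpa only [indicator_of_mem hx] using (hB x hx).trans (le_norm_self B)
  · simp [notMem_support.1 fun h => hx (hms h)]

lemma integral_norm_sq_le_of_support_subset (hμs : μ s ≠ ⊤) (hms : support m ⊆ s)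
    (hB : ∀ x ∈ s, ‖m x‖ ≤ B) : ∫ x, ‖m x‖ ^ 2 ∂μ ≤ B ^ 2 * μ.real s := by
  have hzero (x : α) (hx : x ∉ s) : ‖m x‖ ^ 2 = 0 := by
    simp [notMem_support.1 fun h => hx (hms h)]
  rw [← setIntegral_eq_integral_of_forall_compl_eq_zero hzero]
  refine (le_norm_self _).trans (norm_setIntegral_le_of_norm_le_const hμs.lt_top fun x hx => ?_)
  rw [norm_pow, norm_norm]
  exact pow_le_pow_left₀ (norm_nonneg _) (hB x hx) 2

end SupportedMultiplier

section LittlewoodPaley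

/-- The `j`-th Littlewood–Paley piece of `f`: the Fourier multiplier with symbol `φ (2⁻ʲ ·)`
applied to `f`. The cutoff `φ` is arbitrary; localization comes from hypotheses on its support. -/
noncomputable def littlewoodPaleyPiece {E : Type*} [NormedAddCommGroup E] [NormedSpace ℂ E]
    (φ : ℝ → ℂ) (j : ℤ) (f : ℝ → E) : ℝ → E :=
  𝓕⁻ fun τ => φ ((2 : ℝ) ^ (-j) * τ) • 𝓕 f τ

variable {H : Type*} [NormedAddCommGroup H] [InnerProductSpace ℂ H] [CompleteSpace H]

lemma integral_norm_sq_littlewoodPaleyPiece_le {f : ℝ → H} {φ : ℝ → ℂ} {r R M D : ℝ}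
    (hf : Integrable f) (hφ : Measurable φ) (hφM : ∀ τ, ‖φ τ‖ ≤ M)
    (hφsupp : support φ ⊆ {τ | r ≤ |τ| ∧ |τ| ≤ R}) (hR : 0 ≤ R) (j : ℤ)
    (hD : ∀ τ, r * 2 ^ j ≤ |τ| → ‖𝓕 f τ‖ ≤ D) :
    ∫ t, ‖littlewoodPaleyPiece φ j f t‖ ^ 2 ≤ (M * D) ^ 2 * (2 * (R * 2 ^ j)) := by
  set s : Set ℝ := {τ | r * 2 ^ j ≤ |τ| ∧ |τ| ≤ R * 2 ^ j}
  set m : ℝ → H := fun τ => φ ((2 : ℝ) ^ (-j) * τ) • 𝓕 f τ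
  have hsubset : s ⊆ Icc (-(R * 2 ^ j)) (R * 2 ^ j) := fun τ hτ => abs_le.1 hτ.2
  have hvol : volume s ≠ ⊤ := measure_ne_top_of_subset hsubset measure_Icc_lt_top.ne
  have hmeas : MeasurableSet s := by measurability
  have hms : support m ⊆ s := fun τ hτ => by
    have h := hφsupp (left_ne_zero_of_smul hτ)
    have h2 : (0 : ℝ) < 2 ^ j := zpow_pos two_pos j
    rw [zpow_neg, inv_mul_eq_div, mem_ofPred_eq, abs_div, abs_of_pos h2, le_div_iff₀ h2,
      div_le_iff₀ h2] at h
    exact h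
  have hmB (τ : ℝ) (hτ : τ ∈ s) : ‖m τ‖ ≤ M * D := by
    rw [norm_smul]
    exact mul_le_mul (hφM _) (hD τ hτ.1) (norm_nonneg _) ((norm_nonneg _).trans (hφM 0))
  have hm_meas : AEStronglyMeasurable m :=
    (hφ.comp (measurable_const_mul _)).aestronglyMeasurable.smul
      (continuous_fourier_of_integrable hf).aestronglyMeasurable
  have hmLp := memLp_of_bounded_of_support_subset hm_meas hmeas hvol hms hmB
  calc ∫ t, ‖littlewoodPaleyPiece φ j f t‖ ^ 2 = ∫ τ, ‖m τ‖ ^ 2 :=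
        integral_norm_sq_fourierInv_eq (memLp_one_iff_integrable.1 (hmLp 1)) (hmLp 2)
    _ ≤ (M * D) ^ 2 * volume.real s := integral_norm_sq_le_of_support_subset hvol hms hmB
    _ ≤ (M * D) ^ 2 * (2 * (R * 2 ^ j)) := by
        gcongr
        refine (measureReal_mono hsubset measure_Icc_lt_top.ne).trans_eq ?_
        rw [volume_real_Icc_of_le (by linarith [mul_nonneg hR (zpow_nonneg zero_le_two j)])]
        ring

end LittlewoodPaley

section GeometricSum

lemma add_mul_mul_sq_div_le {A x w : ℝ} (hA : 0 < A) (hx : 0 < x) (hw : w ^ 2 = x / A) :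
    (A + x) * x * (A / (A ^ 2 + x ^ 2)) ^ 2 ≤ 2 * min w w⁻¹ ^ 2 := by
  rw [div_pow, mul_div_assoc', div_le_iff₀ (by positivity)]
  rcases min_choice w w⁻¹ with h | h
  · rw [h, hw, mul_div_assoc', div_mul_eq_mul_div, le_div_iff₀ hA]
    have h₁ : (A + x) * A ^ 3 ≤ 2 * (A ^ 2 + x ^ 2) ^ 2 := by
      nlinarith [sq_nonneg (A ^ 2 - A * x), sq_nonneg (A ^ 2), sq_nonneg (A * x),
        sq_nonneg (x ^ 2)]
    linarith [mul_le_mul_of_nonneg_right h₁ hx.le]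
  · rw [h, inv_pow, hw, inv_div, mul_div_assoc', div_mul_eq_mul_div, le_div_iff₀ hx]
    have h₁ : (A + x) * x ^ 2 * A ≤ 2 * (A ^ 2 + x ^ 2) ^ 2 := by
      nlinarith [sq_nonneg (A * x - x ^ 2), sq_nonneg (A ^ 2), sq_nonneg (A * x),
        sq_nonneg (x ^ 2)]
    linarith [mul_le_mul_of_nonneg_right h₁ hA.le]

lemma summable_pow_natAbs {q : ℝ} (hq : 0 ≤ q) (hq' : q < 1) :
    Summable fun j : ℤ => q ^ j.natAbs :=
  .of_nat_of_neg (by simpa using summable_geometric_of_lt_one hq hq')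
    (by simpa using summable_geometric_of_lt_one hq hq')

lemma min_zpow_mul_inv_le {b z : ℝ} (hb : 1 < b) {m : ℤ} (hz : z ∈ Ico (b ^ m) (b ^ (m + 1)))
    (j : ℤ) : min (b ^ j * z) (b ^ j * z)⁻¹ ≤ b * b⁻¹ ^ (j + m).natAbs := by
  have hb₀ : 0 < b := one_pos.trans hb
  rcases le_total 0 (j + m) with h | h
  · have hpow : b⁻¹ ^ (j + m).natAbs = (b ^ j * b ^ m)⁻¹ := by
      rw [← zpow_natCast, Int.natAbs_of_nonneg h, inv_zpow, zpow_add₀ hb₀.ne']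
    rw [hpow]
    calc min (b ^ j * z) (b ^ j * z)⁻¹ ≤ (b ^ j * z)⁻¹ := min_le_right _ _
      _ ≤ (b ^ j * b ^ m)⁻¹ := by gcongr; exact hz.1
      _ ≤ b * (b ^ j * b ^ m)⁻¹ := le_mul_of_one_le_left (by positivity) hb.le
  · have hpow : b⁻¹ ^ (j + m).natAbs = b ^ j * b ^ m := by
      rw [← zpow_natCast, Int.ofNat_natAbs_of_nonpos h, inv_zpow', neg_neg, zpow_add₀ hb₀.ne']
    rw [hpow]
    calc min (b ^ j * z) (b ^ j * z)⁻¹ ≤ b ^ j * z := min_le_left _ _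
      _ ≤ b ^ j * b ^ (m + 1) := by gcongr; exact hz.2.le
      _ = b * (b ^ j * b ^ m) := by rw [zpow_add_one₀ hb₀.ne']; ring

lemma exists_tsum_min_zpow_mul_inv_le {b : ℝ} (hb : 1 < b) :
    ∃ S : ℝ, ∀ z : ℝ, 0 < z → Summable (fun j : ℤ => min (b ^ j * z) (b ^ j * z)⁻¹) ∧
      ∑' j : ℤ, min (b ^ j * z) (b ^ j * z)⁻¹ ≤ S := by
  have hb₀ : 0 < b := one_pos.trans hb
  have hsum : Summable fun j : ℤ => b * b⁻¹ ^ j.natAbs :=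
    (summable_pow_natAbs (inv_nonneg.2 hb₀.le) (inv_lt_one_of_one_lt₀ hb)).mul_left b
  refine ⟨∑' j : ℤ, b * b⁻¹ ^ j.natAbs, fun z hz => ?_⟩
  obtain ⟨m, hm⟩ := exists_mem_Ico_zpow hz hb
  have hshift : Summable fun j : ℤ => b * b⁻¹ ^ (j + m).natAbs :=
    hsum.comp_injective (add_left_injective m)
  have hmin : Summable fun j : ℤ => min (b ^ j * z) (b ^ j * z)⁻¹ :=
    .of_nonneg_of_le (fun j => by positivity) (min_zpow_mul_inv_le hb hm) hshift
  refine ⟨hmin, (hmin.tsum_le_tsum (min_zpow_mul_inv_le hb hm) hshift).trans_eq ?_⟩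
  exact (Equiv.addRight m).tsum_eq fun j : ℤ => b * b⁻¹ ^ j.natAbs

end GeometricSum

section DyadicSum

variable {H : Type*} [NormedAddCommGroup H] [InnerProductSpace ℂ H] [CompleteSpace H]

lemma sqrt_mul_sqrt_integral_littlewoodPaleyPiece_le {f : ℝ → H} {φ : ℝ → ℂ} {r R M K A : ℝ}
    (hf : Integrable f) (hφ : Measurable φ) (hφM : ∀ τ, ‖φ τ‖ ≤ M) (hr : 0 < r) (hR : 0 ≤ R)
    (hφsupp : support φ ⊆ {τ | r ≤ |τ| ∧ |τ| ≤ R}) (hA : 0 < A) (hK : 0 ≤ K)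
    (hfK : ∀ τ, ‖𝓕 f τ‖ ≤ K * (A / (A ^ 2 + τ ^ 2))) (j : ℤ) :
    √(A + 2 ^ j) * √(∫ t, ‖littlewoodPaleyPiece φ j f t‖ ^ 2)
      ≤ 2 * (M * K) * √((1 + r⁻¹) * (R / r))
        * min (√2 ^ j * √(r / A)) (√2 ^ j * √(r / A))⁻¹ := by
  have hM : 0 ≤ M := (norm_nonneg _).trans (hφM 0)
  set x : ℝ := r * 2 ^ j with hx
  have hx₀ : 0 < x := by positivity
  have h2j : (2 : ℝ) ^ j = x / r := by rw [hx, mul_div_cancel_left₀ _ hr.ne']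
  set w : ℝ := √2 ^ j * √(r / A)
  have hw : w ^ 2 = x / A := by
    rw [mul_pow, sq_sqrt (by positivity), ← zpow_natCast, zpow_comm, zpow_natCast,
      sq_sqrt zero_le_two, hx]
    ring
  have hdecay (τ : ℝ) (hτ : x ≤ |τ|) : ‖𝓕 f τ‖ ≤ K * (A / (A ^ 2 + x ^ 2)) := by
    have hsq : x ^ 2 ≤ τ ^ 2 := sq_le_sq.2 (by rwa [abs_of_pos hx₀])
    exact (hfK τ).trans (by gcongr)
  have hL2 := integral_norm_sq_littlewoodPaleyPiece_le hf hφ hφM hφsupp hR j hdecay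
  have hweight : A + 2 ^ j ≤ (1 + r⁻¹) * (A + x) := by
    rw [h2j, div_eq_inv_mul]
    linarith [mul_nonneg (inv_nonneg.2 hr.le) hA.le]
  rw [← sqrt_mul (by positivity)]
  refine sqrt_le_iff.2 ⟨by positivity, ?_⟩
  calc (A + 2 ^ j) * ∫ t, ‖littlewoodPaleyPiece φ j f t‖ ^ 2
      ≤ ((1 + r⁻¹) * (A + x)) * ((M * (K * (A / (A ^ 2 + x ^ 2)))) ^ 2 * (2 * (R * 2 ^ j))) := by
        gcongr
    _ = 2 * (M * K) ^ 2 * ((1 + r⁻¹) * (R / r))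
          * ((A + x) * x * (A / (A ^ 2 + x ^ 2)) ^ 2) := by
        rw [h2j]; ring
    _ ≤ 2 * (M * K) ^ 2 * ((1 + r⁻¹) * (R / r)) * (2 * min w w⁻¹ ^ 2) :=
        mul_le_mul_of_nonneg_left (add_mul_mul_sq_div_le hA hx₀ hw) (by positivity)
    _ = (2 * (M * K) * √((1 + r⁻¹) * (R / r)) * min w w⁻¹) ^ 2 := by
        rw [mul_pow _ (min w w⁻¹), mul_pow _ √_, sq_sqrt (by positivity)]; ring

theorem stmt_14_general {η : ℝ → H} (hη : ContDiff ℝ 2 η) (hηc : HasCompactSupport η)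
    {φ : ℝ → ℂ} {r R M : ℝ} (hφ : Measurable φ) (hφM : ∀ τ, ‖φ τ‖ ≤ M) (hr : 0 < r) (hR : 0 ≤ R)
    (hφsupp : support φ ⊆ {τ | r ≤ |τ| ∧ |τ| ≤ R}) :
    ∃ C : ℝ, 0 < C ∧ ∀ a : ℝ, 0 ≤ a →
      Summable (fun j : ℤ =>
        √(1 + 2 ^ j + a) * √(∫ t, ‖littlewoodPaleyPiece φ j (expDamping a η) t‖ ^ 2)) ∧
      ∑' j : ℤ, √(1 + 2 ^ j + a) * √(∫ t, ‖littlewoodPaleyPiece φ j (expDamping a η) t‖ ^ 2)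
        ≤ C := by
  obtain ⟨K, hK, hdecay⟩ := exists_norm_fourier_expDamping_le hη hηc
  obtain ⟨S, hS⟩ := exists_tsum_min_zpow_mul_inv_le one_lt_sqrt_two
  have hM : 0 ≤ M := (norm_nonneg _).trans (hφM 0)
  set L : ℝ := 2 * (M * K) * √((1 + r⁻¹) * (R / r))
  refine ⟨|L * S| + 1, by positivity, fun a ha => ?_⟩
  have hterm (j : ℤ) : √(1 + 2 ^ j + a) * √(∫ t, ‖littlewoodPaleyPiece φ j (expDamping a η) t‖ ^ 2)
      ≤ L * min (√2 ^ j * √(r / (1 + a))) (√2 ^ j * √(r / (1 + a)))⁻¹ := by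
    rw [add_right_comm]
    exact sqrt_mul_sqrt_integral_littlewoodPaleyPiece_le (integrable_expDamping
      (hη.continuous.integrable_of_hasCompactSupport hηc) ha) hφ hφM hr hR hφsupp
      (by positivity) hK.le (hdecay a ha) j
  obtain ⟨hmin, hle⟩ := hS √(r / (1 + a)) (by positivity)
  have hsum := Summable.of_nonneg_of_le (fun j => by positivity) hterm (hmin.mul_left L)
  refine ⟨hsum, (hsum.tsum_le_tsum hterm (hmin.mul_left L)).trans ?_⟩
  rw [tsum_mul_left]
  have hL : 0 ≤ L := by positivity
  linarith [mul_le_mul_of_nonneg_left hle hL, le_abs_self (L * S)]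

end DyadicSum

lemma littlewoodPaleyPiece_expDamping_apply (φ : ℝ → ℝ) (η : ℝ → ℂ) (a : ℝ) (j : ℤ) (t : ℝ) :
    littlewoodPaleyPiece (fun τ => φ τ) j (expDamping a η) t =
      ∫ τ : ℝ, Complex.exp (2 * π * t * τ * Complex.I) * ((φ ((2 : ℝ) ^ (-j) * τ) : ℂ) *
        ∫ s : ℝ, Complex.exp (-(2 * π * s * τ) * Complex.I) *
          ((Real.exp (-(a * |s|)) : ℂ) * η s)) := by
  simp only [littlewoodPaleyPiece, fourierInv_eq', fourier_real_eq_integral_exp_smul, expDamping,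
    smul_eq_mul, inner_apply]
  congr! 4 with τ
  · push_cast; ring
  · congr! 4 with s
    push_cast; ring

theorem stmt_14 (η : ℝ → ℂ) (hη : ContDiff ℝ (⊤ : ℕ∞) η)
    (hηsupp : Function.support η ⊆ Set.Icc (-2) 2)
    (φ : ℝ → ℝ) (hφ : ContDiff ℝ (⊤ : ℕ∞) φ)
    (hφ0 : ∀ τ, 0 ≤ φ τ) (hφ1 : ∀ τ, φ τ ≤ 1)
    (hφsupp : Function.support φ ⊆ {τ : ℝ | 1 / 2 ≤ |τ| ∧ |τ| ≤ 2}) :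
    ∃ C : ℝ, 0 < C ∧ ∀ a : ℝ, 0 ≤ a →
      Summable (fun j : ℤ =>
        (1 + (2 : ℝ) ^ j + a) ^ ((1 : ℝ) / 2) *
          (∫ t : ℝ, ‖∫ τ : ℝ, Complex.exp (2 * π * t * τ * Complex.I) *
              ((φ ((2 : ℝ) ^ (-j) * τ) : ℂ) *
                ∫ s : ℝ, Complex.exp (-(2 * π * s * τ) * Complex.I) *
                  ((Real.exp (-(a * |s|)) : ℂ) * η s))‖ ^ 2) ^ ((1 : ℝ) / 2)) ∧
      (∑' j : ℤ,
        (1 + (2 : ℝ) ^ j + a) ^ ((1 : ℝ) / 2) *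
          (∫ t : ℝ, ‖∫ τ : ℝ, Complex.exp (2 * π * t * τ * Complex.I) *
              ((φ ((2 : ℝ) ^ (-j) * τ) : ℂ) *
                ∫ s : ℝ, Complex.exp (-(2 * π * s * τ) * Complex.I) *
                  ((Real.exp (-(a * |s|)) : ℂ) * η s))‖ ^ 2) ^ ((1 : ℝ) / 2)) ≤ C := by
  have hφ1' (τ : ℝ) : ‖(φ τ : ℂ)‖ ≤ 1 := by
    simpa only [Complex.norm_real, norm_of_nonneg (hφ0 τ)] using hφ1 τ
  have hφsupp' : support (fun τ => (φ τ : ℂ)) ⊆ {τ | 1 / 2 ≤ |τ| ∧ |τ| ≤ 2} := fun τ hτ =>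
    hφsupp (Complex.ofReal_ne_zero.1 hτ)
  simpa only [sqrt_eq_rpow, littlewoodPaleyPiece_expDamping_apply] using
    stmt_14_general (contDiff_infty.1 hη 2) (.of_support_subset_isCompact isCompact_Icc hηsupp)
      (φ := fun τ => φ τ)
      (Complex.measurable_ofReal.comp hφ.continuous.measurable) hφ1' one_half_pos zero_le_two
      hφsupp'
end
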